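/- For every N ≥ 1 and every n ∈ ℕ, the following are equivalent: (1) there exists an ℝ-linear map A : ℝⁿ → M(N,ℝ) such that every A(v) is skew-symmetric and A(v)² = −‖v‖² I_N for all v ∈ ℝⁿ; (2) there exists an ℝ-linear map A : ℝⁿ → M(N,ℝ) with every A(v) skew-symmetric and A(v) invertible for every nonzero v; (3) n ≤ ρ(N/16) + 7. (Entry 𝔤 = 𝔰𝔬(N,ℂ) of the Hurwitz–Radon value theorem, the 𝔭-part consisting of the matrices iA with A real skew-symmetric; it recovers Au-Yeung's number ℝ_{sk-s}(N).) -/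

import Mathlib

open Matrix

/-- Extended Hurwitz–Radon number: writing the 2-adic valuation of `t` as `4a + b`
with `a ∈ ℤ` and `b ∈ {0,1,2,3}`, `ρ(t) := 8a + 2^b`. -/
noncomputable def hrRho (t : ℚ) : ℤ :=
  8 * (padicValRat 2 t / 4) + 2 ^ (padicValRat 2 t % 4).toNat

namespace HR

section fred
variable {X Y : Type*} [NormedAddCommGroup X] [InnerProductSpace ℝ X] [CompleteSpace X]
  [NormedAddCommGroup Y] [InnerProductSpace ℝ Y] [CompleteSpace Y]

/-- bounded below on a closed finite-codimensional subspace -/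
def FB (T : X →L[ℝ] Y) : Prop :=
  ∃ (c : ℝ) (Z : Submodule ℝ X), 0 < c ∧ IsClosed (Z : Set X) ∧
    FiniteDimensional ℝ (X ⧸ Z) ∧ ∀ w ∈ Z, c * ‖w‖ ≤ ‖T w‖

theorem FB.fd_ker {T : X →L[ℝ] Y} (h : FB T) : FiniteDimensional ℝ T.ker := by
  obtain ⟨c, Z, hc, hZ, hfd, hb⟩ := h
  let f : T.ker →ₗ[ℝ] X ⧸ Z := Z.mkQ ∘ₗ T.ker.subtype
  refine FiniteDimensional.of_injective f ?_
  rw [← LinearMap.ker_eq_bot, LinearMap.ker_eq_bot']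
  rintro ⟨w, hw⟩ h0
  have hwZ : w ∈ Z := by simpa [f] using h0
  have := hb w hwZ
  have hw' : T w = 0 := hw
  rw [hw', norm_zero] at this
  have : ‖w‖ ≤ 0 := by by_contra hh; push Not at hh; nlinarith [mul_pos hc hh]
  ext; simpa using this

theorem FB.closed_range {T : X →L[ℝ] Y} (h : FB T) : IsClosed (T.range : Set Y) := by
  obtain ⟨c, Z, hc, hZ, hfd, hb⟩ := h
  have : CompleteSpace Z := hZ.completeSpace_coe
  let TZ : Z →L[ℝ] Y := T.comp Z.subtypeL
  have hanti : AntilipschitzWith (Real.toNNReal c⁻¹) TZ := by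
    refine ContinuousLinearMap.antilipschitz_of_bound TZ ?_
    intro x
    rw [Real.coe_toNNReal _ (by positivity)]
    have := hb x x.2
    have h2 : TZ x = T x := rfl
    rw [h2, inv_mul_eq_div, le_div_iff₀ hc]
    simpa [mul_comm] using this
  have hcl : IsClosed (TZ.range : Set Y) := by
    exact hanti.isClosed_range TZ.uniformContinuous
  obtain ⟨W, hW⟩ := Submodule.exists_isCompl Z
  have : FiniteDimensional ℝ W := (Submodule.quotientEquivOfIsCompl Z W hW).finiteDimensional
  have hsup : T.range = TZ.range ⊔ W.map (T : X →ₗ[ℝ] Y) := by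
    have h1 : TZ.range = Z.map (T : X →ₗ[ℝ] Y) := by
      ext y; simp [TZ]
    rw [h1, ← Submodule.map_sup, hW.sup_eq_top, Submodule.map_top]
  rw [hsup]
  exact Submodule.isClosed_sup_finiteDimensional _ _ hcl

noncomputable def idx (T : X →L[ℝ] Y) : ℤ :=
  (Module.finrank ℝ T.ker : ℤ) - Module.finrank ℝ (ContinuousLinearMap.adjoint T).ker

end fred

theorem bordered {X Y : Type*} [AddCommGroup X] [Module ℝ X] [AddCommGroup Y] [Module ℝ Y]
    (T : X →ₗ[ℝ] Y) (X0 : Submodule ℝ X) (Y0 : Submodule ℝ Y)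
    [FiniteDimensional ℝ Y0] [FiniteDimensional ℝ (X ⧸ X0)]
    (hb : Function.Bijective (LinearMap.coprod (T ∘ₗ X0.subtype) Y0.subtype)) :
    Module.finrank ℝ T.ker + Module.finrank ℝ Y0
      = Module.finrank ℝ (Y ⧸ T.range) + Module.finrank ℝ (X ⧸ X0) := by
  classical
  -- P = {(x,y) | T x + y = 0}
  let Ψ : (X × Y0) →ₗ[ℝ] Y := LinearMap.coprod T Y0.subtype
  -- ker Ψ ≃ X/X0
  let q : Ψ.ker →ₗ[ℝ] X ⧸ X0 := X0.mkQ ∘ₗ (LinearMap.fst ℝ X Y0) ∘ₗ Ψ.ker.subtype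
  have hq : Function.Bijective q := by
    constructor
    · rw [← LinearMap.ker_eq_bot, LinearMap.ker_eq_bot']
      rintro ⟨⟨x, y⟩, hxy⟩ h0
      have hx : x ∈ X0 := by simpa [q] using h0
      have hxy' : T x + y = 0 := by simpa [Ψ] using hxy
      have := @hb.1 (⟨x, hx⟩, y) 0 (by simpa using hxy')
      simp only [Prod.mk_eq_zero] at this
      ext
      · simpa using congrArg Subtype.val this.1
      · simpa using congrArg Subtype.val this.2
    · intro z
      obtain ⟨x, rfl⟩ := X0.mkQ_surjective z
      obtain ⟨⟨x0, y0⟩, h⟩ := hb.2 (T x)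
      refine ⟨⟨(x - x0, -y0), ?_⟩, ?_⟩
      · simp at h
        simp [Ψ, ← h]
      · simp only [q, LinearMap.comp_apply, Submodule.subtype_apply, LinearMap.fst_apply, map_sub]
        rw [sub_eq_self]
        simp
  have e1 := (LinearEquiv.ofBijective q hq).finrank_eq
  have : FiniteDimensional ℝ Ψ.ker := (LinearEquiv.ofBijective q hq).symm.finiteDimensional
  let r : Ψ.ker →ₗ[ℝ] Y0 := (LinearMap.snd ℝ X Y0) ∘ₗ Ψ.ker.subtype
  have e2 := r.finrank_range_add_finrank_ker
  -- ker r ≃ ker T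
  let k : T.ker →ₗ[ℝ] r.ker :=
    { toFun := fun x => ⟨⟨(x, 0), by simp [Ψ]⟩, by simp [r]⟩
      map_add' := by intro a b; ext <;> simp
      map_smul' := by intro a b; ext <;> simp }
  have hk : Function.Bijective k := by
    constructor
    · intro a b hab
      have := congrArg (fun z => z.1.1.1) hab
      ext; exact this
    · rintro ⟨⟨⟨x, y⟩, hxy⟩, hr⟩
      have hy : y = 0 := by simpa [r] using hr
      subst hy
      refine ⟨⟨x, by simpa [Ψ] using hxy⟩, ?_⟩
      rfl
  have e3 := (LinearEquiv.ofBijective k hk).finrank_eq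
  -- Y0 / range r ≃ Y / range T
  let p : Y0 →ₗ[ℝ] Y ⧸ T.range := T.range.mkQ ∘ₗ Y0.subtype
  have hp : Function.Surjective p := by
    intro z
    obtain ⟨y, rfl⟩ := T.range.mkQ_surjective z
    obtain ⟨⟨x0, y0⟩, h⟩ := hb.2 y
    refine ⟨y0, ?_⟩
    simp only [p, LinearMap.comp_apply, Submodule.mkQ_apply]
    rw [Submodule.Quotient.eq]
    refine ⟨-x0, ?_⟩
    simp at h
    simp [← h]
  have hpk : p.ker = r.range := by
    ext y
    simp only [p, r, LinearMap.mem_ker, LinearMap.comp_apply, Submodule.mkQ_apply, LinearMap.mem_range, Submodule.Quotient.mk_eq_zero, Submodule.subtype_apply]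
    constructor
    · rintro ⟨x, hx⟩
      exact ⟨⟨(-x, y), by simp [Ψ, hx]⟩, rfl⟩
    · rintro ⟨⟨⟨x, y'⟩, hxy⟩, rfl⟩
      refine ⟨-x, ?_⟩
      have : T x + y' = 0 := by simpa [Ψ] using hxy
      simp only [LinearMap.snd_apply, map_neg]
      exact (eq_neg_of_add_eq_zero_right this).symm
  have e4 := p.finrank_range_add_finrank_ker
  rw [LinearMap.range_eq_top.2 hp, finrank_top, hpk] at e4
  omega

section fred
variable {X Y : Type*} [NormedAddCommGroup X] [InnerProductSpace ℝ X] [CompleteSpace X]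
  [NormedAddCommGroup Y] [InnerProductSpace ℝ Y] [CompleteSpace Y]
open ContinuousLinearMap Filter Topology

theorem finrank_quot_eq_orth (Z : Submodule ℝ X) (hZ : IsClosed (Z : Set X)) :
    Module.finrank ℝ (X ⧸ Z) = Module.finrank ℝ Zᗮ := by
  have : CompleteSpace Z := hZ.completeSpace_coe
  exact (Submodule.quotientEquivOfIsCompl Z Zᗮ (Submodule.isCompl_orthogonal _)).finrank_eq

theorem idx_nhds (T : X →L[ℝ] Y) (h1 : FB T) (h2 : FB (adjoint T)) :
    ∀ᶠ T' in 𝓝 T, FB T' → FB (adjoint T') → idx T' = idx T := by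
  have := h1.fd_ker
  have := h2.fd_ker
  have hcr := h1.closed_range
  let X0 : Submodule ℝ X := T.kerᗮ
  let Y0 : Submodule ℝ Y := (adjoint T).ker
  have hY0 : Y0 = T.rangeᗮ := (ContinuousLinearMap.orthogonal_range T).symm
  have : CompleteSpace T.range := hcr.completeSpace_coe
  have : CompleteSpace X0 := (Submodule.isClosed_orthogonal _).completeSpace_coe
  have : CompleteSpace Y0 := FiniteDimensional.complete ℝ Y0
  have : CompleteSpace T.ker := FiniteDimensional.complete ℝ T.ker
  let Φ : (X →L[ℝ] Y) → (X0 × Y0) →L[ℝ] Y := fun S => (S.comp X0.subtypeL).coprod Y0.subtypeL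
  have hΦ : Function.Bijective (Φ T) := by
    constructor
    · rw [← ContinuousLinearMap.coe_coe, ← LinearMap.ker_eq_bot, LinearMap.ker_eq_bot']
      rintro ⟨⟨x, hx⟩, ⟨y, hy⟩⟩ h
      have h' : T x + y = 0 := by simpa [Φ] using h
      have hy' : y ∈ T.rangeᗮ := hY0 ▸ hy
      have : y = T (-x) := by rw [map_neg]; exact eq_neg_of_add_eq_zero_right h'
      have hy0 : y = 0 := by
        have h3 : y ∈ T.range ⊓ T.rangeᗮ := ⟨⟨-x, this.symm⟩, hy'⟩
        rw [Submodule.inf_orthogonal_eq_bot] at h3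
        simpa using h3
      have hx0 : x = 0 := by
        have h3 : x ∈ T.ker ⊓ T.kerᗮ := ⟨by simpa [hy0] using h', hx⟩
        rw [Submodule.inf_orthogonal_eq_bot] at h3
        simpa using h3
      ext
      · exact hx0
      · exact hy0
    · intro y
      obtain ⟨a, ha, b, hb, hab⟩ := Submodule.exists_add_mem_mem_orthogonal (K := T.range) y
      obtain ⟨x, rfl⟩ := ha
      obtain ⟨a', ha', b', hb', hab'⟩ := Submodule.exists_add_mem_mem_orthogonal (K := T.ker) x
      refine ⟨(⟨b', hb'⟩, ⟨b, by rw [hY0]; exact hb⟩), ?_⟩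
      have : T x = T b' := by
        rw [hab', map_add]; simp [show T a' = 0 from ha']
      simp only [Φ, coprod_apply, coe_comp', Function.comp_apply, Submodule.subtypeL_apply]
      rw [hab, ← this]; rfl
  let e : (X0 × Y0) ≃L[ℝ] Y := ContinuousLinearEquiv.ofBijective (Φ T)
    (LinearMap.ker_eq_bot.2 hΦ.1) (LinearMap.range_eq_top.2 hΦ.2)
  have he : (e : (X0 × Y0) →L[ℝ] Y) = Φ T := ContinuousLinearEquiv.coe_ofBijective _ _ _
  have hcont : Continuous Φ := by
    have : Φ = fun S => (S.comp X0.subtypeL).comp (ContinuousLinearMap.fst ℝ X0 Y0) +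
      Y0.subtypeL.comp (ContinuousLinearMap.snd ℝ X0 Y0) := by
      funext S; ext z <;> simp [Φ]
    rw [this]
    fun_prop
  have hev : ∀ᶠ S in 𝓝 T, Φ S ∈ Set.range ((↑) : ((X0 × Y0) ≃L[ℝ] Y) → (X0 × Y0) →L[ℝ] Y) := by
    apply hcont.continuousAt.eventually
    rw [← he]
    exact ContinuousLinearEquiv.nhds e
  filter_upwards [hev] with S hS hS1 hS2
  obtain ⟨e', he'⟩ := hS
  have hbS : Function.Bijective (LinearMap.coprod ((S : X →ₗ[ℝ] Y) ∘ₗ X0.subtype) Y0.subtype) := by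
    have := e'.bijective
    have h3 : ⇑e' = ⇑(LinearMap.coprod ((S : X →ₗ[ℝ] Y) ∘ₗ X0.subtype) Y0.subtype) := by
      funext z
      have := congrArg (fun f => f z) he'
      simpa [Φ] using this
    rwa [h3] at this
  have hX0o : X0ᗮ = T.ker := Submodule.orthogonal_orthogonal _
  have : FiniteDimensional ℝ X0ᗮ := by rw [hX0o]; infer_instance
  have : FiniteDimensional ℝ (X ⧸ X0) :=
    (Submodule.quotientEquivOfIsCompl X0 X0ᗮ (Submodule.isCompl_orthogonal _)).symm.finiteDimensional
  have key := bordered (S : X →ₗ[ℝ] Y) X0 Y0 hbS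
  have k1 : Module.finrank ℝ (X ⧸ X0) = Module.finrank ℝ T.ker := by
    rw [finrank_quot_eq_orth X0 (Submodule.isClosed_orthogonal _), hX0o]
  have k2 : Module.finrank ℝ (Y ⧸ S.range) = Module.finrank ℝ (adjoint S).ker := by
    rw [finrank_quot_eq_orth _ hS1.closed_range, ContinuousLinearMap.orthogonal_range]
  unfold idx
  have key' : Module.finrank ℝ S.ker + Module.finrank ℝ Y0 = Module.finrank ℝ (Y ⧸ S.range) + Module.finrank ℝ (X ⧸ X0) := key
  rw [k1, k2] at key'
  have : Module.finrank ℝ Y0 = Module.finrank ℝ (adjoint T).ker := rfl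
  omega

end fred
end HR

namespace HR

abbrev I (n : ℕ) := Fin n → ℕ
abbrev HH (ι : Type) := lp (fun _ : ι => ℝ) 2
abbrev H (n : ℕ) := HH (I n)

section wc
variable {ι : Type}

theorem norm_sq_HH (v : HH ι) : ‖v‖ ^ 2 = ∑' a, v a ^ 2 := by
  have := lp.norm_rpow_eq_tsum (p := 2) (by norm_num) v
  simpa using this

theorem summable_sq_HH (v : HH ι) : Summable fun a => v a ^ 2 := by
  have := (lp.memℓp v).summable (by norm_num)
  simpa using this

theorem wc_sum_le (u : HH ι) (v : ι → ℝ) (g : ι → ι) (e : ℝ) (he : 0 ≤ e)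
    (h : ∀ a, |v a| ≤ e * |u (g a)|) (hg : Set.InjOn g {a | v a ≠ 0}) (s : Finset ι) :
    ∑ a ∈ s, v a ^ 2 ≤ (e * ‖u‖) ^ 2 := by
  classical
  have h1 : ∑ a ∈ s, v a ^ 2 = ∑ a ∈ s.filter (fun a => v a ≠ 0), v a ^ 2 := by
    rw [Finset.sum_filter]
    refine Finset.sum_congr rfl fun a _ => ?_
    split_ifs with h
    · rfl
    · push Not at h; simp [h]
  rw [h1]
  calc _ ≤ ∑ a ∈ s.filter (fun a => v a ≠ 0), e ^ 2 * u (g a) ^ 2 := by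
        refine Finset.sum_le_sum fun a _ => ?_
        have := h a
        rw [← sq_abs (v a), ← sq_abs (u (g a)), ← mul_pow]
        exact pow_le_pow_left₀ (abs_nonneg _) this 2
    _ = e ^ 2 * ∑ b ∈ (s.filter (fun a => v a ≠ 0)).image g, u b ^ 2 := by
        rw [Finset.sum_image, Finset.mul_sum]
        intro a ha b hb
        exact hg (by simpa using (Finset.mem_filter.1 ha).2) (by simpa using (Finset.mem_filter.1 hb).2)
    _ ≤ e ^ 2 * ‖u‖ ^ 2 := by
        rw [norm_sq_HH]
        gcongr
        exact (summable_sq_HH u).sum_le_tsum _ (fun _ _ => sq_nonneg _)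
    _ = _ := by ring

theorem wc_norm_le (u v : HH ι) (g : ι → ι) (e : ℝ) (he : 0 ≤ e)
    (h : ∀ a, |v a| ≤ e * |u (g a)|) (hg : Set.InjOn g {a | v a ≠ 0}) : ‖v‖ ≤ e * ‖u‖ := by
  have : ‖v‖ ^ 2 ≤ (e * ‖u‖) ^ 2 := by
    rw [norm_sq_HH]
    exact (summable_sq_HH v).tsum_le_of_sum_le (wc_sum_le u v g e he h hg)
  exact le_of_sq_le_sq this (by positivity)

theorem wc_mem (u : HH ι) (v : ι → ℝ) (g : ι → ι) (e : ℝ) (he : 0 ≤ e)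
    (h : ∀ a, |v a| ≤ e * |u (g a)|) (hg : Set.InjOn g {a | v a ≠ 0}) :
    Memℓp (E := fun _ : ι => ℝ) v 2 := by
  refine memℓp_gen' (C := (e * ‖u‖) ^ 2) fun s => ?_
  simpa using wc_sum_le u v g e he h hg s

structure WCok (g : ι → ι) (c : ι → ℝ) : Prop where
  bd : ∀ a, |c a| ≤ 1
  inj : Set.InjOn g {a | c a ≠ 0}

noncomputable def wc (g : ι → ι) (c : ι → ℝ) (h : WCok g c) : HH ι →L[ℝ] HH ι :=
  LinearMap.mkContinuous
    { toFun := fun u => ⟨fun a => c a * u (g a), wc_mem u _ g 1 zero_le_one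
        (fun a => by rw [abs_mul]; gcongr; exact h.bd a)
        (h.inj.mono fun a ha => by simp at ha; exact ha.1)⟩
      map_add' := by intro u v; ext a; simp [mul_add]; rfl
      map_smul' := by intro r v; ext a; simp; ring } 1
    (by
      intro u
      refine wc_norm_le u _ g 1 zero_le_one
        (fun a => ?_) ?_
      · simp only [LinearMap.coe_mk, AddHom.coe_mk]; rw [abs_mul]; gcongr; exact h.bd a
      · refine h.inj.mono fun a ha => ?_
        simp at ha; exact ha.1)

@[simp] theorem wc_apply (g : ι → ι) (c : ι → ℝ) (h : WCok g c) (u : HH ι) (a : ι) :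
    wc g c h u a = c a * u (g a) := rfl

theorem inner_HH (u v : HH ι) : inner ℝ u v = ∑' a, u a * v a := by
  rw [lp.inner_eq_tsum]; congr 1; funext a; simp [mul_comm]

theorem wc_adj (g g' : ι → ι) (c c' : ι → ℝ) (h : WCok g c) (h' : WCok g' c')
    (h1 : ∀ b, c' b ≠ 0 → g (g' b) = b ∧ c (g' b) = c' b)
    (h2 : ∀ a, c a ≠ 0 → g' (g a) = a ∧ c' (g a) = c a) (u v : HH ι) :
    inner ℝ (wc g c h u) v = inner ℝ u (wc g' c' h' v) := by
  rw [inner_HH, inner_HH]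
  simp only [wc_apply]
  symm
  have hne : ∀ x : Function.support (fun a => c a * u (g a) * v a), c x ≠ 0 := by
    rintro ⟨x, hx⟩ h0; apply hx; simp [h0]
  refine tsum_eq_tsum_of_ne_zero_bij (fun x => g x) ?_ ?_ ?_
  · intro x y hxy
    have := (h2 x (hne x)).1
    have h3 := (h2 y (hne y)).1
    simp only at hxy
    rw [hxy] at this
    exact Subtype.ext (this.symm.trans h3)
  · intro b hb
    have hb' : c' b ≠ 0 := by intro h0; apply hb; simp [h0]
    obtain ⟨e1, e2⟩ := h1 b hb'
    refine ⟨⟨g' b, ?_⟩, e1⟩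
    have hb2 : u b * (c' b * v (g' b)) ≠ 0 := hb
    change c (g' b) * u (g (g' b)) * v (g' b) ≠ 0
    rw [e1, e2]; convert hb2 using 1; ring
  · intro x
    obtain ⟨e1, e2⟩ := h2 x (hne x)
    simp only [e1, e2]; ring

end wc

/-! ladder -/
section ladder
variable {n : ℕ}

def up (i : Fin n) (a : I n) : I n := Function.update a i (a i + 1)
def dn (i : Fin n) (a : I n) : I n := Function.update a i (a i - 1)
def lev (a : I n) : ℕ := ∑ i, a i

@[simp] theorem dn_up (i : Fin n) (a : I n) : dn i (up i a) = a := by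
  simp [dn, up]
theorem up_dn (i : Fin n) (a : I n) (h : a i ≠ 0) : up i (dn i a) = a := by
  simp [dn, up, Nat.sub_add_cancel (Nat.pos_of_ne_zero h)]
@[simp] theorem up_same (i : Fin n) (a : I n) : up i a i = a i + 1 := by simp [up]
@[simp] theorem dn_same (i : Fin n) (a : I n) : dn i a i = a i - 1 := by simp [dn]
theorem up_ne {i j : Fin n} (a : I n) (h : j ≠ i) : up i a j = a j := by simp [up, h]
theorem dn_ne {i j : Fin n} (a : I n) (h : j ≠ i) : dn i a j = a j := by simp [dn, h]
theorem up_comm (i j : Fin n) (a : I n) : up i (up j a) = up j (up i a) := by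
  by_cases h : i = j
  · subst h; rfl
  · ext k; by_cases hk : k = i <;> by_cases hk' : k = j <;> simp_all [up]
theorem dn_comm (i j : Fin n) (a : I n) : dn i (dn j a) = dn j (dn i a) := by
  by_cases h : i = j
  · subst h; rfl
  · ext k; by_cases hk : k = i <;> by_cases hk' : k = j <;> simp_all [dn]
theorem up_dn_comm {i j : Fin n} (h : i ≠ j) (a : I n) : up i (dn j a) = dn j (up i a) := by
  ext k; by_cases hk : k = i <;> by_cases hk' : k = j <;> simp_all [dn, up]
@[simp] theorem lev_up (i : Fin n) (a : I n) : lev (up i a) = lev a + 1 := by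
  unfold lev up
  rw [Finset.sum_update_of_mem (Finset.mem_univ i), ← Finset.add_sum_erase _ _ (Finset.mem_univ i),
    Finset.sdiff_singleton_eq_erase]
  ring
theorem lev_dn (i : Fin n) (a : I n) (h : a i ≠ 0) : lev (dn i a) + 1 = lev a := by
  rw [← lev_up i, up_dn i a h]
theorem le_lev (i : Fin n) (a : I n) : a i ≤ lev a :=
  Finset.single_le_sum (f := fun i => a i) (fun _ _ => Nat.zero_le _) (Finset.mem_univ i)
theorem lev_eq_zero (a : I n) (h : lev a = 0) : a = 0 := by
  funext i; have := le_lev i a; simp; omega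

/-- formal annihilation and creation -/
noncomputable def an (i : Fin n) : (I n → ℝ) →ₗ[ℝ] (I n → ℝ) where
  toFun u a := √(a i + 1) * u (up i a)
  map_add' u v := by funext a; simp [mul_add]
  map_smul' r v := by funext a; simp; ring
noncomputable def cr (i : Fin n) : (I n → ℝ) →ₗ[ℝ] (I n → ℝ) where
  toFun u a := √(a i) * u (dn i a)
  map_add' u v := by funext a; simp [mul_add]
  map_smul' r v := by funext a; simp; ring

theorem an_apply (i : Fin n) (u : I n → ℝ) (a : I n) : an i u a = √(a i + 1) * u (up i a) := rfl
theorem cr_apply (i : Fin n) (u : I n → ℝ) (a : I n) : cr i u a = √(a i) * u (dn i a) := rfl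

theorem an_an (i j : Fin n) (u : I n → ℝ) : an i (an j u) = an j (an i u) := by
  by_cases h : i = j
  · subst h; rfl
  · funext a
    simp only [an_apply, up_ne a h, up_ne a (Ne.symm h), up_comm i j]; ring
theorem cr_cr (i j : Fin n) (u : I n → ℝ) : cr i (cr j u) = cr j (cr i u) := by
  by_cases h : i = j
  · subst h; rfl
  · funext a
    simp only [cr_apply, dn_ne a h, dn_ne a (Ne.symm h), dn_comm i j]; ring
theorem an_cr (i j : Fin n) (u : I n → ℝ) :
    an i (cr j u) = cr j (an i u) + (if i = j then u else 0) := by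
  by_cases h : i = j
  · subst h
    funext a
    simp only [an_apply, cr_apply, if_true, Pi.add_apply, dn_up, up_same, dn_same]
    push_cast
    by_cases h0 : a i = 0
    · simp [h0]
    · rw [up_dn i a h0, ← mul_assoc, ← mul_assoc, Real.mul_self_sqrt (by positivity)]
      have : ((a i - 1 : ℕ) : ℝ) + 1 = a i := by
        have := Nat.sub_add_cancel (Nat.pos_of_ne_zero h0); exact_mod_cast this
      rw [this, Real.mul_self_sqrt (by positivity)]; ring
  · funext a
    simp only [an_apply, cr_apply, if_neg h, add_zero, dn_ne a h, up_ne a (Ne.symm h), up_dn_comm h]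
    ring
theorem cr_an_self (u : I n → ℝ) (a : I n) : ∑ i, cr i (an i u) a = lev a * u a := by
  unfold lev
  push_cast
  rw [Finset.sum_mul]
  refine Finset.sum_congr rfl fun i _ => ?_
  simp only [an_apply, cr_apply, dn_same]
  by_cases h0 : a i = 0
  · simp [h0]
  · have : ((a i - 1 : ℕ) : ℝ) + 1 = a i := by
      have := Nat.sub_add_cancel (Nat.pos_of_ne_zero h0); exact_mod_cast this
    rw [up_dn i a h0, this, ← mul_assoc, Real.mul_self_sqrt (by positivity)]

/-- weights -/
noncomputable def ff (a : I n) : ℝ := (√√(lev a + 1))⁻¹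
noncomputable def RR (a : I n) : ℝ := (√(lev a + 1))⁻¹
theorem ff_pos (a : I n) : 0 < ff a := by unfold ff; positivity
theorem RR_pos (a : I n) : 0 < RR a := by unfold RR; positivity
theorem ff_sq (a : I n) : ff a * ff a = RR a := by
  unfold ff RR; rw [← mul_inv, Real.mul_self_sqrt (by positivity)]
theorem RR_sq (a : I n) : RR a * RR a = ((lev a : ℝ) + 1)⁻¹ := by
  unfold RR; rw [← mul_inv, Real.mul_self_sqrt (by positivity)]
theorem RR_le_one (a : I n) : RR a ≤ 1 := by
  unfold RR; apply inv_le_one_of_one_le₀; rw [Real.one_le_sqrt]; simp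
theorem sqrt_RR_up (i : Fin n) (a : I n) : √(a i + 1) * RR a ≤ 1 := by
  unfold RR
  rw [mul_inv_le_iff₀ (by positivity), one_mul]
  have := le_lev i a
  gcongr
theorem RR_up_le (i : Fin n) (a : I n) : RR (up i a) ≤ RR a := by
  unfold RR; rw [lev_up]; push_cast; gcongr; linarith
theorem ff_up_le (i : Fin n) (a : I n) : ff (up i a) ≤ ff a := by
  unfold ff; rw [lev_up]; push_cast; gcongr; linarith

theorem up_injective (i : Fin n) : Function.Injective (up (n := n) i) := by
  intro a b h; rw [← dn_up i a, h, dn_up]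
theorem dn_injOn (i : Fin n) : Set.InjOn (dn (n := n) i) {a | a i ≠ 0} := by
  intro a ha b hb h; rw [← up_dn i a ha, h, up_dn i b hb]

/-- weights for `p a q` -/
noncomputable def wlo (p q : I n → ℝ) (i : Fin n) (a : I n) : ℝ := p a * √(a i + 1) * q (up i a)
noncomputable def whi (p q : I n → ℝ) (i : Fin n) (a : I n) : ℝ := p a * √(a i) * q (dn i a)

theorem whi_ne {p q : I n → ℝ} {i : Fin n} {a : I n} (h : whi p q i a ≠ 0) : a i ≠ 0 := by
  intro h0; apply h; simp [whi, h0]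

theorem whi_up (p q : I n → ℝ) (i : Fin n) (a : I n) : whi q p i (up i a) = wlo p q i a := by
  simp [whi, wlo]; ring

structure Wok (p q : I n → ℝ) : Prop where
  bd : ∀ i a, |wlo p q i a| ≤ 1

theorem Wok.lo {p q : I n → ℝ} (h : Wok p q) (i : Fin n) : WCok (up i) (wlo p q i) :=
  ⟨h.bd i, (up_injective i).injOn⟩
theorem Wok.hi {p q : I n → ℝ} (h : Wok p q) (i : Fin n) : WCok (dn i) (whi q p i) :=
  ⟨fun a => by
    by_cases h0 : a i = 0
    · simp [whi, h0]
    · rw [← up_dn i a h0, whi_up]; exact h.bd i _,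
   (dn_injOn i).mono fun _ ha => whi_ne ha⟩

noncomputable def lo {p q : I n → ℝ} (h : Wok p q) (i : Fin n) : H n →L[ℝ] H n := wc _ _ (h.lo i)
noncomputable def hi {p q : I n → ℝ} (h : Wok p q) (i : Fin n) : H n →L[ℝ] H n := wc _ _ (h.hi i)

theorem lo_apply {p q : I n → ℝ} (h : Wok p q) (i : Fin n) (u : H n) (a : I n) :
    lo h i u a = p a * an i (fun b => q b * u b) a := by
  simp [lo, wlo, an_apply]; ring
theorem hi_apply {p q : I n → ℝ} (h : Wok p q) (i : Fin n) (u : H n) (a : I n) :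
    hi h i u a = q a * cr i (fun b => p b * u b) a := by
  simp [hi, whi, cr_apply]; ring

theorem lo_hi_adj {p q : I n → ℝ} (h : Wok p q) (i : Fin n) (u v : H n) :
    inner ℝ (lo h i u) v = inner ℝ u (hi h i v) := by
  refine wc_adj _ _ _ _ _ _ ?_ ?_ u v
  · intro b hb
    have hb' := whi_ne hb
    refine ⟨up_dn i b hb', ?_⟩
    rw [← whi_up, up_dn i b hb']
  · intro a _
    exact ⟨dn_up i a, whi_up p q i a⟩

theorem hi_lo_adj {p q : I n → ℝ} (h : Wok p q) (i : Fin n) (u v : H n) :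
    inner ℝ (hi h i u) v = inner ℝ u (lo h i v) := by
  rw [real_inner_comm, ← lo_hi_adj, real_inner_comm]

theorem ok_ff : Wok (n := n) ff ff := ⟨fun i a => by
  rw [abs_of_nonneg (by unfold wlo; have := ff_pos a; have := ff_pos (up i a); positivity)]
  unfold wlo
  calc ff a * √(a i + 1) * ff (up i a) ≤ ff a * √(a i + 1) * ff a := by
        have := ff_pos a; have := ff_up_le i a; gcongr
    _ = √(a i + 1) * RR a := by rw [← ff_sq]; ring
    _ ≤ 1 := sqrt_RR_up i a⟩
theorem ok_1R : Wok (n := n) 1 RR := ⟨fun i a => by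
  rw [abs_of_nonneg (by unfold wlo; have := RR_pos (up i a); simp; positivity)]
  unfold wlo
  calc (1 : I n → ℝ) a * √(a i + 1) * RR (up i a) ≤ √(a i + 1) * RR a := by
        simp; have := RR_up_le i a; gcongr
    _ ≤ 1 := sqrt_RR_up i a⟩
theorem ok_R1 : Wok (n := n) RR 1 := ⟨fun i a => by
  rw [abs_of_nonneg (by unfold wlo; have := RR_pos a; simp; positivity)]
  unfold wlo
  calc RR a * √(a i + 1) * (1 : I n → ℝ) (up i a) ≤ √(a i + 1) * RR a := by
        simp [mul_comm]
    _ ≤ 1 := sqrt_RR_up i a⟩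

noncomputable def RO : H n →L[ℝ] H n := wc id RR ⟨fun a => by
  rw [abs_of_pos (RR_pos a)]; exact RR_le_one a, Function.injective_id.injOn⟩
theorem RO_apply (u : H n) (a : I n) : RO u a = RR a * u a := rfl
theorem RO_adj (u v : H n) : inner ℝ (RO u) v = inner ℝ u (RO v) :=
  wc_adj _ _ _ _ _ _ (fun _ _ => ⟨rfl, rfl⟩) (fun _ _ => ⟨rfl, rfl⟩) u v

/-- `al = a R`, `be = a† R`. -/
noncomputable def al (i : Fin n) : H n →L[ℝ] H n := lo ok_1R i
noncomputable def be (i : Fin n) : H n →L[ℝ] H n := hi ok_R1 i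

theorem al_apply (i : Fin n) (u : H n) : (al i u : I n → ℝ) = an i (RO u : I n → ℝ) := by
  funext a; rw [al, lo_apply]; simp only [Pi.one_apply, one_mul]; rfl
theorem be_apply (i : Fin n) (u : H n) : (be i u : I n → ℝ) = cr i (RO u : I n → ℝ) := by
  funext a; rw [be, hi_apply]; simp only [Pi.one_apply, one_mul]; rfl

theorem rel_bb (i j : Fin n) (u v : H n) : inner ℝ (be i u) (be j v) =
    inner ℝ (al j u) (al i v) + if i = j then inner ℝ (RO u) (RO v) else 0 := by
  have : (if i = j then inner ℝ (RO u) (RO v) else 0 : ℝ) = inner ℝ u (if i = j then RO (RO v) else 0) := by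
    split_ifs
    · rw [RO_adj]
    · simp
  rw [this, be, al, hi_lo_adj, lo_hi_adj, ← inner_add_right]
  congr 1
  ext a
  rw [lp.coeFn_add, Pi.add_apply, lo_apply, hi_apply]
  simp only [Pi.one_apply, one_mul]
  change RR a * an i (be j v) a = RR a * cr j (al i v) a + _
  rw [be_apply, al_apply, an_cr, Pi.add_apply, mul_add]
  split_ifs <;> simp [RO_apply]

theorem rel_ab (i j : Fin n) (u v : H n) : inner ℝ (al i u) (be j v) = inner ℝ (al j u) (be i v) := by
  rw [al, al, lo_hi_adj, lo_hi_adj]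
  congr 1
  ext a
  rw [hi_apply, hi_apply]
  simp only [Pi.one_apply, one_mul]
  change RR a * cr i (be j v) a = RR a * cr j (be i v) a
  rw [be_apply, be_apply, cr_cr]

theorem rel_sum (u : H n) : ∑ i, ‖al i u‖ ^ 2 = ‖u‖ ^ 2 - ‖RO u‖ ^ 2 := by
  have : ∀ i, ‖al i u‖ ^ 2 = inner ℝ u (hi ok_1R i (al i u)) := by
    intro i; rw [← real_inner_self_eq_norm_sq, ← lo_hi_adj]; rfl
  simp_rw [this]
  rw [← inner_sum, ← real_inner_self_eq_norm_sq, ← real_inner_self_eq_norm_sq, RO_adj, ← inner_sub_right]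
  congr 1
  ext a
  rw [lp.coeFn_sum, Finset.sum_apply, lp.coeFn_sub, Pi.sub_apply]
  simp_rw [hi_apply, Pi.one_apply, one_mul]
  change ∑ i, RR a * cr i (al i u) a = _
  simp_rw [al_apply]
  rw [← Finset.mul_sum, cr_an_self]
  simp only [RO_apply]
  have h := RR_sq a
  have h2 : ((lev a : ℝ) + 1) * (RR a * RR a) = 1 := by rw [h]; field_simp
  linear_combination (u a) * h2
end ladder
end HR

namespace HR

section joint
variable {F : Type*} [NormedAddCommGroup F] [InnerProductSpace ℝ F] [FiniteDimensional ℝ F] {n : ℕ}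

theorem joint_onb (X : Fin n → F →ₗ[ℝ] F) (hs : ∀ i, (X i).IsSymmetric)
    (hc : ∀ i j, i ≠ j → Commute (X i) (X j)) :
    ∃ (κ : Type) (_ : Fintype κ) (b : OrthonormalBasis κ ℝ F) (l : κ → Fin n → ℝ),
      ∀ k i, X i (b k) = l k i • b k := by
  classical
  have hI := LinearMap.IsSymmetric.directSum_isInternal_of_pairwise_commute hs
    (fun i j h => hc i j h)
  have hO := LinearMap.IsSymmetric.orthogonalFamily_iInf_eigenspaces hs
  let vb := fun γ : Fin n → ℝ =>
    stdOrthonormalBasis ℝ (⨅ j, Module.End.eigenspace (X j) (γ j) : Submodule ℝ F)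
  let B := hI.collectedBasis (fun γ => (vb γ).toBasis)
  have hB : Orthonormal ℝ B := by
    refine DirectSum.IsInternal.collectedBasis_orthonormal hO hI ?_
    intro γ; simpa using (vb γ).orthonormal
  let ft := FiniteDimensional.fintypeBasisIndex B
  refine ⟨_, ft, B.toOrthonormalBasis hB, fun k => k.1, fun k i => ?_⟩
  have : B k ∈ (⨅ j, Module.End.eigenspace (X j) (k.1 j) : Submodule ℝ F) :=
    hI.collectedBasis_mem _ k
  rw [Submodule.mem_iInf] at this
  have := this i
  rw [Module.End.mem_eigenspace_iff] at this
  simpa using this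

theorem pos_fin {σ : Type} [Fintype σ] (C : Fin n → Matrix σ σ ℝ) (c : ℝ)
    (hC : ∀ (x : Fin n → ℝ) (v : σ → ℝ),
      c * (∑ i, x i ^ 2) * (∑ s, v s ^ 2) ≤ ∑ s, (∑ i, ∑ t, C i s t * (x i * v t)) ^ 2)
    (X : Fin n → F →ₗ[ℝ] F) (hs : ∀ i, (X i).IsSymmetric)
    (hc : ∀ i j, i ≠ j → Commute (X i) (X j)) (u : σ → F) :
    c * ∑ i, ∑ t, ‖X i (u t)‖ ^ 2 ≤ ∑ s, ‖∑ i, ∑ t, C i s t • X i (u t)‖ ^ 2 := by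
  obtain ⟨κ, _, b, l, hl⟩ := joint_onb X hs hc
  have hn : ∀ v : F, ‖v‖ ^ 2 = ∑ k, (inner ℝ (b k) v : ℝ) ^ 2 := fun v => by
    rw [← b.sum_sq_norm_inner_right v]; simp
  have hX : ∀ k i v, (inner ℝ (b k) (X i v) : ℝ) = l k i * inner ℝ (b k) v := fun k i v => by
    rw [← hs i, hl, inner_smul_left]; simp
  simp_rw [hn, inner_sum, inner_smul_right, hX]
  calc _ = ∑ k, c * (∑ i, l k i ^ 2) * (∑ t, (inner ℝ (b k) (u t) : ℝ) ^ 2) := by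
        simp_rw [mul_pow, mul_assoc, Finset.sum_mul_sum]
        rw [← Finset.mul_sum]
        congr 1
        rw [Finset.sum_comm]
        refine (Finset.sum_congr rfl fun t _ => Finset.sum_comm).trans ?_
        rw [Finset.sum_comm]
        exact Finset.sum_congr rfl fun k _ => Finset.sum_comm
    _ ≤ ∑ k, ∑ s, (∑ i, ∑ t, C i s t * (l k i * inner ℝ (b k) (u t))) ^ 2 :=
        Finset.sum_le_sum fun k _ => hC _ _
    _ = _ := Finset.sum_comm
end joint

section box
variable {n : ℕ}

/-- truncated lowering weights -/
noncomputable def tl (L : ℕ) (i : Fin n) (a : I n) : ℝ := if a i + 1 < L then √(a i + 1) / L else 0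
noncomputable def th (L : ℕ) (i : Fin n) (a : I n) : ℝ := if a i < L then √(a i) / L else 0

theorem sqrt_div_le (L m : ℕ) (h : m ≤ L) : |√(m : ℝ) / L| ≤ 1 := by
  rw [abs_of_nonneg (by positivity)]
  apply div_le_one_of_le₀ _ (by positivity)
  rw [Real.sqrt_le_left (by positivity)]
  have : m ≤ L ^ 2 := h.trans (Nat.le_self_pow (by norm_num) L)
  exact_mod_cast this

theorem tl_ok (L : ℕ) (i : Fin n) : WCok (up i) (tl L i) := ⟨fun a => by
  unfold tl; split_ifs with h
  · exact_mod_cast sqrt_div_le L (a i + 1) h.le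
  · simp, (up_injective i).injOn⟩
theorem th_ok (L : ℕ) (i : Fin n) : WCok (dn i) (th L i) := ⟨fun a => by
  unfold th; split_ifs with h
  · exact sqrt_div_le L (a i) h.le
  · simp, (dn_injOn i).mono fun a (ha : th L i a ≠ 0) (h0 : a i = 0) => ha (by simp [th, h0])⟩

theorem th_up (L : ℕ) (i : Fin n) (a : I n) : th L i (up i a) = tl L i a := by
  simp [th, tl]

noncomputable def XX (L : ℕ) (i : Fin n) : H n →L[ℝ] H n := wc _ _ (tl_ok L i) + wc _ _ (th_ok L i)

theorem XX_apply (L : ℕ) (i : Fin n) (u : H n) (a : I n) :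
    XX L i u a = tl L i a * u (up i a) + th L i a * u (dn i a) := rfl

theorem XX_sym (L : ℕ) (i : Fin n) (u v : H n) : inner ℝ (XX L i u) v = inner ℝ u (XX L i v) := by
  have key : ∀ u v : H n, inner ℝ (wc _ _ (tl_ok L i) u) v = inner ℝ u (wc _ _ (th_ok L i) v) := by
    intro u v
    refine wc_adj _ _ _ _ _ _ ?_ ?_ u v
    · intro b hb
      have hb' : b i ≠ 0 := fun h0 => hb (by simp [th, h0])
      refine ⟨up_dn i b hb', ?_⟩
      rw [← th_up, up_dn i b hb']
    · intro a _
      exact ⟨dn_up i a, th_up L i a⟩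
  change inner ℝ (wc _ _ (tl_ok L i) u + wc _ _ (th_ok L i) u) v =
    inner ℝ u (wc _ _ (tl_ok L i) v + wc _ _ (th_ok L i) v)
  rw [inner_add_left, inner_add_right, key, add_comm]
  congr 1
  rw [real_inner_comm, ← key, real_inner_comm]

theorem XX_comm (L : ℕ) (i j : Fin n) (h : i ≠ j) (u : H n) : XX L i (XX L j u) = XX L j (XX L i u) := by
  ext a
  have h' := h.symm
  simp only [XX_apply, tl, th, up_ne a h, up_ne a h', dn_ne a h, dn_ne a h', up_comm i j, dn_comm i j,
    up_dn_comm h, up_dn_comm h']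
  ring

def Fbox (n L : ℕ) : Submodule ℝ (H n) where
  carrier := {u | ∀ a : I n, (∃ i, L ≤ a i) → u a = 0}
  zero_mem' := fun a _ => rfl
  add_mem' := fun {u v} hu hv a ha => by
    rw [lp.coeFn_add, Pi.add_apply, hu a ha, hv a ha, add_zero]
  smul_mem' := fun r u hu a ha => by
    rw [lp.coeFn_smul, Pi.smul_apply, hu a ha, smul_zero]

instance (n L : ℕ) : FiniteDimensional ℝ (Fbox n L) := by
  let f : Fbox n L →ₗ[ℝ] ((Fin n → Fin L) → ℝ) :=
    { toFun := fun u a => (u : H n) (fun i => (a i : ℕ))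
      map_add' := fun u v => rfl
      map_smul' := fun r u => rfl }
  refine FiniteDimensional.of_injective f ?_
  rw [← LinearMap.ker_eq_bot, LinearMap.ker_eq_bot']
  intro u hu
  ext a
  by_cases ha : ∃ i, L ≤ a i
  · exact u.2 a ha
  · push Not at ha
    exact congrFun hu (fun i => ⟨a i, ha i⟩)

theorem XX_mem (L : ℕ) (i : Fin n) (u : H n) (hu : u ∈ Fbox n L) : XX L i u ∈ Fbox n L := by
  rintro a ⟨j, hj⟩
  rw [XX_apply]
  have h1 : tl L i a * u (up i a) = 0 := by
    by_cases hij : j = i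
    · subst hij; simp [tl]; intro h; omega
    · rw [hu (up i a) ⟨j, by rwa [up_ne a hij]⟩, mul_zero]
  have h2 : th L i a * u (dn i a) = 0 := by
    by_cases hij : j = i
    · subst hij; simp [th]; intro h; omega
    · rw [hu (dn i a) ⟨j, by rwa [dn_ne a hij]⟩, mul_zero]
  rw [h1, h2, add_zero]

/-- `ŷ = al + be` -/
noncomputable def yh (i : Fin n) : H n →L[ℝ] H n := al i + be i
noncomputable def ph (i : Fin n) : H n →L[ℝ] H n := al i - be i

theorem yh_box (L : ℕ) (i : Fin n) (u : H n) (hu : u ∈ Fbox n L) :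
    yh i u = ((L + 1 : ℕ) : ℝ) • XX (L + 1) i (RO u) := by
  ext a
  have e1 : yh i u a = an i (RO u) a + cr i (RO u) a := by
    rw [← al_apply, ← be_apply]; rfl
  rw [e1, lp.coeFn_smul, Pi.smul_apply, XX_apply, an_apply, cr_apply, smul_eq_mul, mul_add]
  have hL : ((L + 1 : ℕ) : ℝ) ≠ 0 := by positivity
  congr 1
  · rw [RO_apply]
    unfold tl
    split_ifs with h
    · field_simp
    · rw [hu (up i a) ⟨i, by rw [up_same]; omega⟩]; ring
  · rw [RO_apply]
    unfold th
    split_ifs with h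
    · field_simp
    · rw [hu (dn i a) ⟨i, by rw [dn_same]; omega⟩]; ring

theorem RO_mem (L : ℕ) (u : H n) (hu : u ∈ Fbox n L) : RO u ∈ Fbox n (L + 1) := by
  rintro a ⟨i, hi⟩
  rw [RO_apply, hu a ⟨i, by omega⟩, mul_zero]

theorem pos_box {σ : Type} [Fintype σ] (C : Fin n → Matrix σ σ ℝ) (c : ℝ)
    (hC : ∀ (x : Fin n → ℝ) (v : σ → ℝ),
      c * (∑ i, x i ^ 2) * (∑ s, v s ^ 2) ≤ ∑ s, (∑ i, ∑ t, C i s t * (x i * v t)) ^ 2)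
    (L : ℕ) (u : σ → H n) (hu : ∀ t, u t ∈ Fbox n L) :
    c * ∑ i, ∑ t, ‖yh i (u t)‖ ^ 2 ≤ ∑ s, ‖∑ i, ∑ t, C i s t • yh i (u t)‖ ^ 2 := by
  let X : Fin n → Fbox n (L + 1) →ₗ[ℝ] Fbox n (L + 1) := fun i =>
    (((L + 1 : ℕ) : ℝ) • (XX (L + 1) i : H n →ₗ[ℝ] H n)).restrict
      (fun u hu => Submodule.smul_mem _ _ (XX_mem _ i u hu))
  have := pos_fin C c hC X ?_ ?_ (fun t => ⟨RO (u t), RO_mem L _ (hu t)⟩)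
  · have e : ∀ i t, yh i (u t) = (X i ⟨RO (u t), RO_mem L _ (hu t)⟩ : H n) := fun i t => by
      rw [yh_box L i _ (hu t)]; rfl
    simp_rw [e]
    convert this using 3
    · rfl
    · rw [Submodule.coe_norm]; simp only [Submodule.coe_sum, Submodule.coe_smul]
  · intro i u v
    change inner ℝ (((L + 1 : ℕ) : ℝ) • XX (L + 1) i u) (v : H n) =
      inner ℝ (u : H n) (((L + 1 : ℕ) : ℝ) • XX (L + 1) i v)
    rw [inner_smul_left, inner_smul_right, XX_sym]; simp
  · intro i j hij
    refine LinearMap.ext fun u => Subtype.ext ?_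
    change ((L + 1 : ℕ) : ℝ) • XX (L + 1) i (((L + 1 : ℕ) : ℝ) • XX (L + 1) j (u : H n)) =
      ((L + 1 : ℕ) : ℝ) • XX (L + 1) j (((L + 1 : ℕ) : ℝ) • XX (L + 1) i (u : H n))
    rw [map_smul, map_smul, XX_comm _ _ _ hij]

theorem pos_all {σ : Type} [Fintype σ] (C : Fin n → Matrix σ σ ℝ) (c : ℝ)
    (hC : ∀ (x : Fin n → ℝ) (v : σ → ℝ),
      c * (∑ i, x i ^ 2) * (∑ s, v s ^ 2) ≤ ∑ s, (∑ i, ∑ t, C i s t * (x i * v t)) ^ 2)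
    (u : σ → H n) :
    c * ∑ i, ∑ t, ‖yh i (u t)‖ ^ 2 ≤ ∑ s, ‖∑ i, ∑ t, C i s t • yh i (u t)‖ ^ 2 := by
  classical
  let w : Finset (I n) → σ → H n := fun s t => ∑ a ∈ s, lp.single 2 a (u t a)
  have hw : Filter.Tendsto w Filter.atTop (nhds u) := by
    rw [tendsto_pi_nhds]
    intro t
    exact lp.hasSum_single (by norm_num) (u t)
  have c1 : Continuous fun u : σ → H n => c * ∑ i, ∑ t, ‖yh i (u t)‖ ^ 2 := by fun_prop
  have c2 : Continuous fun u : σ → H n => ∑ s, ‖∑ i, ∑ t, C i s t • yh i (u t)‖ ^ 2 := by fun_prop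
  refine le_of_tendsto_of_tendsto' ((c1.tendsto u).comp hw) ((c2.tendsto u).comp hw) fun s => ?_
  let L := s.sup lev + 1
  refine pos_box C c hC L (w s) fun t => ?_
  refine Submodule.sum_mem _ fun a ha => ?_
  rintro b ⟨i, hi⟩
  have hb : b ≠ a := by
    rintro rfl
    have := Finset.le_sup (f := lev) ha
    have := le_lev i b
    omega
  rw [lp.single_apply]
  simp [hb]
end box
end HR

namespace HR

section tn
variable {n : ℕ} {σ : Type} [Fintype σ]

abbrev EE (n : ℕ) (σ : Type) [Fintype σ] := PiLp 2 (fun _ : σ => H n)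

noncomputable def tn (M : Matrix σ σ ℝ) (S : H n →L[ℝ] H n) : EE n σ →L[ℝ] EE n σ :=
  ((PiLp.continuousLinearEquiv 2 ℝ (fun _ : σ => H n)).symm : (σ → H n) →L[ℝ] EE n σ).comp
    ((ContinuousLinearMap.pi fun s => ∑ t, M s t • S.comp (ContinuousLinearMap.proj t)).comp
      (PiLp.continuousLinearEquiv 2 ℝ (fun _ : σ => H n) : EE n σ →L[ℝ] (σ → H n)))

theorem tn_apply (M : Matrix σ σ ℝ) (S : H n →L[ℝ] H n) (u : EE n σ) (s : σ) :
    tn M S u s = ∑ t, M s t • S (u t) := by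
  simp [tn]

theorem tn_add (M M' : Matrix σ σ ℝ) (S : H n →L[ℝ] H n) : tn (M + M') S = tn M S + tn M' S := by
  ext u s : 2
  simp [tn_apply, add_smul, Finset.sum_add_distrib]

theorem tn_smul (r : ℝ) (M : Matrix σ σ ℝ) (S : H n →L[ℝ] H n) : tn (r • M) S = r • tn M S := by
  ext u s : 2
  simp [tn_apply, Finset.smul_sum, mul_smul]

theorem tn_add_right (M : Matrix σ σ ℝ) (S S' : H n →L[ℝ] H n) : tn M (S + S') = tn M S + tn M S' := by
  ext u s : 2
  simp [tn_apply, Finset.sum_add_distrib]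
theorem tn_sub_right (M : Matrix σ σ ℝ) (S S' : H n →L[ℝ] H n) : tn M (S - S') = tn M S - tn M S' := by
  ext u s : 2
  simp [tn_apply, smul_sub, Finset.sum_sub_distrib]
theorem tn_neg (M : Matrix σ σ ℝ) (S : H n →L[ℝ] H n) : tn (-M) S = - tn M S := by
  ext u s : 2
  simp [tn_apply]

theorem tn_mul (M M' : Matrix σ σ ℝ) (S S' : H n →L[ℝ] H n) (u : EE n σ) :
    tn M S (tn M' S' u) = tn (M * M') (S.comp S') u := by
  refine PiLp.ext fun s => ?_
  simp only [tn_apply, map_sum, map_smul, Finset.smul_sum, smul_smul, Matrix.mul_apply, Finset.sum_smul,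
    ContinuousLinearMap.comp_apply]
  rw [Finset.sum_comm]

theorem inner_tn (M M' : Matrix σ σ ℝ) (S S' : H n →L[ℝ] H n) (u v : EE n σ) :
    inner ℝ (tn M S u) (tn M' S' v) = ∑ t, ∑ t', (Mᵀ * M') t t' * inner ℝ (S (u t)) (S' (v t')) := by
  rw [PiLp.inner_apply]
  simp only [tn_apply, sum_inner, inner_sum, inner_smul_left, inner_smul_right, Matrix.mul_apply,
    Matrix.transpose_apply, Finset.sum_mul]
  simp only [starRingEnd_apply, star_trivial, Finset.mul_sum]
  refine (Finset.sum_congr rfl fun x _ => Finset.sum_comm).trans ?_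
  rw [Finset.sum_comm]
  refine Finset.sum_congr rfl fun t _ => ?_
  rw [Finset.sum_comm]
  refine Finset.sum_congr rfl fun t' _ => ?_
  refine Finset.sum_congr rfl fun s _ => ?_
  ring

theorem tn_adj (M : Matrix σ σ ℝ) (S S' : H n →L[ℝ] H n)
    (h : ∀ u v, inner ℝ (S u) v = inner ℝ u (S' v)) (u v : EE n σ) :
    inner ℝ (tn M S u) v = inner ℝ u (tn Mᵀ S' v) := by
  rw [PiLp.inner_apply, PiLp.inner_apply]
  simp only [tn_apply, sum_inner, inner_sum, inner_smul_left, inner_smul_right, h]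
  rw [Finset.sum_comm]
  simp

/-- the truncated Dirac operator -/
noncomputable def TT (B : Fin n → Matrix σ σ ℝ) : EE n σ →L[ℝ] EE n σ :=
  ∑ i, (tn (B i) (lo ok_ff i) - tn (B i)ᵀ (hi ok_ff i))

theorem TT_skew (B : Fin n → Matrix σ σ ℝ) (u v : EE n σ) :
    inner ℝ (TT B u) v = - inner ℝ u (TT B v) := by
  simp only [TT, ContinuousLinearMap.sum_apply, ContinuousLinearMap.sub_apply, sum_inner, inner_sum,
    inner_sub_left, inner_sub_right]
  rw [← Finset.sum_neg_distrib]
  refine Finset.sum_congr rfl fun i _ => ?_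
  rw [tn_adj _ _ _ (lo_hi_adj ok_ff i), tn_adj _ _ _ (hi_lo_adj ok_ff i), transpose_transpose]
  ring

noncomputable def DD (G C : Fin n → Matrix σ σ ℝ) : EE n σ →L[ℝ] EE n σ :=
  ∑ i, (tn (G i) (ph i) + tn (C i) (yh i))

structure Sys [DecidableEq σ] (G C : Fin n → Matrix σ σ ℝ) : Prop where
  Gs : ∀ i, (G i)ᵀ = G i
  Gr : ∀ i j, G i * G j + G j * G i = (if i = j then (2 : ℝ) else 0) • 1
  Cs : ∀ i, (C i)ᵀ = - C i
  GC : ∀ i j, G i * C j = - (C j * G i)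
  pos : ∃ c : ℝ, 0 < c ∧ ∀ (x : Fin n → ℝ) (v : σ → ℝ),
      c * (∑ i, x i ^ 2) * (∑ s, v s ^ 2) ≤ ∑ s, (∑ i, ∑ t, C i s t * (x i * v t)) ^ 2

theorem ph_ph (i j : Fin n) (u v : H n) : inner ℝ (ph i u) (ph j v) = inner ℝ (ph j u) (ph i v) := by
  simp only [ph, ContinuousLinearMap.sub_apply, inner_sub_left, inner_sub_right]
  have h1 := rel_bb i j u v
  have h2 := rel_bb j i u v
  have h3 := rel_ab i j u v
  have h4 := rel_ab i j v u
  rw [real_inner_comm, real_inner_comm (be i u)] at h4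
  simp only [eq_comm (a := j)] at h2
  linarith

theorem ph_yh (i j : Fin n) (u v : H n) : inner ℝ (ph i u) (yh j v) + inner ℝ (yh j u) (ph i v) =
    if i = j then - 2 * inner ℝ (RO u) (RO v) else 0 := by
  simp only [ph, yh, ContinuousLinearMap.sub_apply, ContinuousLinearMap.add_apply, inner_sub_left,
    inner_sub_right, inner_add_left, inner_add_right]
  have h1 := rel_bb i j u v
  have h2 := rel_bb j i u v
  have h3 := rel_ab i j u v
  have h4 := rel_ab i j v u
  rw [real_inner_comm, real_inner_comm (be i u)] at h4
  simp only [eq_comm (a := j)] at h2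
  split_ifs at * <;> linarith

theorem norm_sq_EE (u : EE n σ) : ‖u‖ ^ 2 = ∑ t, ‖u t‖ ^ 2 := by
  rw [PiLp.norm_sq_eq_of_L2]

theorem DD_bound [DecidableEq σ] {G C : Fin n → Matrix σ σ ℝ} (h : Sys G C) :
    ∃ c m : ℝ, 0 < c ∧ ∀ w : EE n σ, c * ‖w‖ ^ 2 - m * ‖tn 1 RO w‖ ^ 2 ≤ ‖DD G C w‖ ^ 2 := by
  obtain ⟨c₀, hc₀, hpos₀⟩ := h.pos
  set c := min c₀ 1 with hc
  have hc1 : c ≤ 1 := min_le_right _ _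
  have hcpos : 0 < c := lt_min hc₀ one_pos
  have hpos : ∀ (x : Fin n → ℝ) (v : σ → ℝ),
      c * (∑ i, x i ^ 2) * (∑ s, v s ^ 2) ≤ ∑ s, (∑ i, ∑ t, C i s t * (x i * v t)) ^ 2 := by
    intro x v
    refine le_trans ?_ (hpos₀ x v)
    have h1 : 0 ≤ ∑ i, x i ^ 2 := by positivity
    have h2 : 0 ≤ ∑ s, v s ^ 2 := by positivity
    have h3 : c ≤ c₀ := min_le_left _ _
    gcongr
  refine ⟨2 * c, 2 * c + 2 * ∑ i, ‖(tn (G i * C i) (ContinuousLinearMap.id ℝ (H n)) : EE n σ →L[ℝ] EE n σ)‖,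
    by positivity, fun w => ?_⟩
  set P : EE n σ := ∑ i, tn (G i) (ph i) w
  set Q : EE n σ := ∑ i, tn (C i) (yh i) w
  have hD : DD G C w = P + Q := by
    simp [DD, P, Q, ContinuousLinearMap.sum_apply, Finset.sum_add_distrib]
  have hP : ‖P‖ ^ 2 = ∑ i, ∑ t, ‖ph i (w t)‖ ^ 2 := by
    rw [← real_inner_self_eq_norm_sq]
    simp only [P, sum_inner, inner_sum, inner_tn, h.Gs]
    have e : ∑ i, ∑ j, ∑ t, ∑ t', (G i * G j) t t' * inner ℝ (ph i (w t)) (ph j (w t')) =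
        ∑ i, ∑ j, ∑ t, ∑ t', (G j * G i) t t' * inner ℝ (ph i (w t)) (ph j (w t')) := by
      rw [Finset.sum_comm]
      refine Finset.sum_congr rfl fun i _ => Finset.sum_congr rfl fun j _ =>
        Finset.sum_congr rfl fun t _ => Finset.sum_congr rfl fun t' _ => ?_
      rw [ph_ph]
    have e2 : ∑ i, ∑ j, ∑ t, ∑ t', (G i * G j + G j * G i) t t' * inner ℝ (ph i (w t)) (ph j (w t'))
        = 2 * ∑ i, ∑ t, ‖ph i (w t)‖ ^ 2 := by
      simp only [h.Gr]
      rw [Finset.mul_sum]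
      refine Finset.sum_congr rfl fun i _ => ?_
      rw [Finset.sum_eq_single i]
      · rw [Finset.mul_sum]
        refine Finset.sum_congr rfl fun t _ => ?_
        rw [Finset.sum_eq_single t]
        · simp
        · intro t' _ ht; simp [Matrix.one_apply_ne ht.symm]
        · simp
      · intro j _ hj; simp [hj.symm]
      · simp
    simp only [Matrix.add_apply, add_mul, Finset.sum_add_distrib] at e2
    rw [Finset.sum_comm]
    linarith
  have hQ : c * ∑ i, ∑ t, ‖yh i (w t)‖ ^ 2 ≤ ‖Q‖ ^ 2 := by
    refine (pos_all C c hpos (fun t => w t)).trans (le_of_eq ?_)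
    rw [norm_sq_EE]
    refine Finset.sum_congr rfl fun s _ => ?_
    congr 2
    simp [Q, tn_apply, WithLp.ofLp_sum, Finset.sum_apply]
  have hPQ : inner ℝ P Q = - ∑ i, inner ℝ (tn 1 RO w) (tn (G i * C i) RO w) := by
    have sy : ∀ i j, (G i * C j)ᵀ = G i * C j := fun i j => by
      rw [transpose_mul, h.Gs, h.Cs, h.GC, neg_mul]
    simp only [P, Q, sum_inner, inner_sum, inner_tn, h.Gs]
    rw [← Finset.sum_neg_distrib]
    have key : ∀ i j, ∑ t, ∑ t', (G i * C j) t t' * (inner ℝ (ph i (w t)) (yh j (w t')) : ℝ) =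
        if i = j then - ∑ t, ∑ t', ((1 : Matrix σ σ ℝ)ᵀ * (G i * C i)) t t' * inner ℝ (RO (w t)) (RO (w t')) else 0 := by
      intro i j
      have e : ∑ t, ∑ t', (G i * C j) t t' * (inner ℝ (ph i (w t)) (yh j (w t')) : ℝ) =
          ∑ t, ∑ t', (G i * C j) t t' * (inner ℝ (yh j (w t)) (ph i (w t')) : ℝ) := by
        rw [Finset.sum_comm]
        refine Finset.sum_congr rfl fun t _ => Finset.sum_congr rfl fun t' _ => ?_
        rw [real_inner_comm]
        congr 1
        exact congrFun (congrFun (sy i j) t) t'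
      have e2 : ∑ t, ∑ t', (G i * C j) t t' * ((inner ℝ (ph i (w t)) (yh j (w t')) : ℝ) +
          inner ℝ (yh j (w t)) (ph i (w t'))) =
          2 * if i = j then - ∑ t, ∑ t', ((1 : Matrix σ σ ℝ)ᵀ * (G i * C i)) t t' * inner ℝ (RO (w t)) (RO (w t')) else 0 := by
        simp only [ph_yh]
        split_ifs with hij
        · subst hij
          simp only [transpose_one, one_mul, Finset.mul_sum, ← Finset.sum_neg_distrib]
          refine Finset.sum_congr rfl fun t _ => Finset.sum_congr rfl fun t' _ => ?_
          ring
        · simp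
      simp only [mul_add, Finset.sum_add_distrib] at e2
      linarith
    refine Finset.sum_congr rfl fun i _ => ?_
    simp only [key]
    simp
  have hb : ∀ i, (inner ℝ (tn 1 RO w) (tn (G i * C i) RO w) : ℝ) ≤
      ‖(tn (G i * C i) (ContinuousLinearMap.id ℝ (H n)) : EE n σ →L[ℝ] EE n σ)‖ * ‖tn 1 RO w‖ ^ 2 := by
    intro i
    have : tn (G i * C i) RO w = tn (G i * C i) (ContinuousLinearMap.id ℝ (H n)) (tn 1 RO w) := by
      rw [tn_mul, mul_one]; rfl
    rw [this]
    calc _ ≤ ‖tn 1 RO w‖ * ‖tn (G i * C i) (ContinuousLinearMap.id ℝ (H n)) (tn 1 RO w)‖ :=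
          real_inner_le_norm _ _
      _ ≤ ‖tn 1 RO w‖ * (‖(tn (G i * C i) (ContinuousLinearMap.id ℝ (H n)) : EE n σ →L[ℝ] EE n σ)‖ * ‖tn 1 RO w‖) := by
          gcongr; exact ContinuousLinearMap.le_opNorm _ _
      _ = _ := by ring
  have hsum : ∑ i, inner ℝ (tn 1 RO w) (tn (G i * C i) RO w) ≤
      (∑ i, ‖(tn (G i * C i) (ContinuousLinearMap.id ℝ (H n)) : EE n σ →L[ℝ] EE n σ)‖) * ‖tn 1 RO w‖ ^ 2 := by
    rw [Finset.sum_mul]; exact Finset.sum_le_sum fun i _ => hb i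
  have hpar : ∑ i, ∑ t, ‖ph i (w t)‖ ^ 2 + ∑ i, ∑ t, ‖yh i (w t)‖ ^ 2 ≥
      2 * (‖w‖ ^ 2 - ‖tn 1 RO w‖ ^ 2) := by
    have e1 : ‖w‖ ^ 2 - ‖tn 1 RO w‖ ^ 2 = ∑ i, ∑ t, ‖al i (w t)‖ ^ 2 := by
      rw [Finset.sum_comm, norm_sq_EE, norm_sq_EE, ← Finset.sum_sub_distrib]
      refine Finset.sum_congr rfl fun t _ => ?_
      rw [rel_sum, tn_apply]
      congr 3
      rw [Finset.sum_eq_single t]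
      · simp
      · intro t' _ ht; simp [Matrix.one_apply_ne ht.symm]
      · simp
    rw [e1, ← Finset.sum_add_distrib, Finset.mul_sum]
    refine Finset.sum_le_sum fun i _ => ?_
    rw [← Finset.sum_add_distrib, Finset.mul_sum]
    refine Finset.sum_le_sum fun t _ => ?_
    have := parallelogram_law_with_norm ℝ (al i (w t)) (be i (w t))
    simp only [ph, yh, ContinuousLinearMap.sub_apply, ContinuousLinearMap.add_apply]
    nlinarith [sq_nonneg ‖be i (w t)‖]
  rw [hD, norm_add_sq_real, hP, hPQ]
  have hp0 : 0 ≤ ∑ i, ∑ t, ‖ph i (w t)‖ ^ 2 := by positivity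
  nlinarith [mul_le_mul_of_nonneg_right hc1 hp0]
end tn
end HR

namespace HR

section cmp
variable {n : ℕ} {σ : Type} [Fintype σ]

theorem wt_diff (i : Fin n) (a : I n) :
    √(a i + 1) * ff a * (ff a - ff (up i a)) ≤ ((lev a : ℝ) + 1)⁻¹ := by
  unfold ff
  rw [lev_up]
  push_cast
  have hl : √((a i : ℝ) + 1) ≤ √((lev a : ℝ) + 1) := by
    have := le_lev i a
    gcongr
  set m : ℝ := (lev a : ℝ) with hm
  have hm0 : 0 ≤ m := by positivity
  set p := √√(m + 1)
  set q := √√(m + 1 + 1)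
  have hp : 0 < p := by positivity
  have hq : 0 < q := by positivity
  have hp2 : p ^ 2 = √(m + 1) := Real.sq_sqrt (by positivity)
  have hp4 : p ^ 4 = m + 1 := by
    rw [show p ^ 4 = (p ^ 2) ^ 2 by ring, hp2, Real.sq_sqrt (by positivity)]
  have hq4 : q ^ 4 = m + 1 + 1 := by
    rw [show q ^ 4 = (q ^ 2) ^ 2 by ring, Real.sq_sqrt (by positivity), Real.sq_sqrt (by positivity)]
  have hpq : p ≤ q := by simp only [p, q]; gcongr; linarith
  rw [← hp2] at hl
  have h0 : 0 ≤ p⁻¹ - q⁻¹ := by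
    rw [sub_nonneg]; gcongr
  calc _ ≤ p ^ 2 * p⁻¹ * (p⁻¹ - q⁻¹) := by gcongr
    _ = (q - p) / q := by field_simp
    _ ≤ (p ^ 4)⁻¹ := by
      rw [div_le_iff₀ hq, inv_mul_eq_div, le_div_iff₀ (by positivity)]
      have h1 : (q - p) * (q ^ 3) ≤ 1 := by
        have h5 : p ^ 3 ≤ q ^ 3 := by gcongr
        nlinarith [mul_le_mul_of_nonneg_left h5 hp.le]
      have h2 : (q - p) * p ^ 4 ≤ (q - p) * (q ^ 3 * q) := by
        have : 0 ≤ q - p := by linarith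
        have : p ^ 4 ≤ q ^ 3 * q := by calc p ^ 4 ≤ q ^ 4 := by gcongr
          _ = _ := by ring
        gcongr
      nlinarith
    _ = _ := by rw [hp4]

def sup_ge (K : ℕ) (u : H n) : Prop := ∀ a, lev a < K → u a = 0

theorem lo_diff (K : ℕ) (i : Fin n) (u : H n) (hu : sup_ge (K + 1) u) :
    ‖(lo ok_ff i - al i) u‖ ≤ ((K : ℝ) + 1)⁻¹ * ‖u‖ := by
  refine wc_norm_le u _ (up i) _ (by positivity) ?_ (up_injective i).injOn
  intro a
  by_cases h : lev (up i a) < K + 1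
  · rw [ContinuousLinearMap.sub_apply, lp.coeFn_sub, Pi.sub_apply, lo_apply, al_apply, an_apply, an_apply, RO_apply, hu _ h]; simp
  · have e : (lo ok_ff i - al i) u a = (√(a i + 1) * ff (up i a) * (ff a - ff (up i a))) * u (up i a) := by
      rw [ContinuousLinearMap.sub_apply, lp.coeFn_sub, Pi.sub_apply, lo_apply, al_apply, an_apply, an_apply, RO_apply, ← ff_sq]; ring
    rw [e, abs_mul]
    have h0 := ff_up_le i a
    have h1 := ff_pos (up i a)
    rw [abs_of_nonneg (mul_nonneg (by positivity) (by linarith))]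
    gcongr
    calc _ ≤ √(a i + 1) * ff a * (ff a - ff (up i a)) := by
          have : 0 ≤ ff a - ff (up i a) := by linarith
          gcongr
      _ ≤ _ := wt_diff i a
      _ ≤ _ := by
        have : K ≤ lev a := by rw [lev_up] at h; omega
        gcongr

theorem hi_diff (K : ℕ) (i : Fin n) (u : H n) (hu : sup_ge (K + 1) u) :
    ‖(hi ok_ff i - be i) u‖ ≤ ((K : ℝ) + 1)⁻¹ * ‖u‖ := by
  have e : ∀ a, (hi ok_ff i - be i) u a = (√(a i) * ff (dn i a) * (ff a - ff (dn i a))) * u (dn i a) := by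
      intro a
      rw [ContinuousLinearMap.sub_apply, lp.coeFn_sub, Pi.sub_apply, hi_apply, be_apply, cr_apply, cr_apply, RO_apply, ← ff_sq]; ring
  refine wc_norm_le u _ (dn i) _ (by positivity) ?_ ((dn_injOn i).mono ?_)
  · intro a
    rw [e]
    by_cases h0 : a i = 0
    · simp [h0]; positivity
    obtain ⟨b, rfl⟩ : ∃ b, a = up i b := ⟨dn i a, (up_dn i a h0).symm⟩
    rw [dn_up]
    by_cases h : lev b < K + 1
    · rw [hu _ h]; simp
    · rw [abs_mul]
      have h0 := ff_up_le i b
      have h1 := ff_pos b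
      rw [show √((up i b i : ℕ) : ℝ) * ff b * (ff (up i b) - ff b) = -(√(b i + 1) * ff b * (ff b - ff (up i b))) by
        rw [up_same]; push_cast; ring]
      rw [abs_neg, abs_of_nonneg (mul_nonneg (by positivity) (by linarith))]
      gcongr
      calc _ ≤ _ := wt_diff i b
        _ ≤ _ := by
          have : K ≤ lev b := by omega
          gcongr
  · intro a (ha : (hi ok_ff i - be i) u a ≠ 0) (h0 : a i = 0)
    apply ha; rw [e]; simp [h0]

theorem tn_norm_le (M : Matrix σ σ ℝ) [DecidableEq σ] (S : H n →L[ℝ] H n) (e : ℝ) (he : 0 ≤ e) (w : EE n σ)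
    (h : ∀ t, ‖S (w t)‖ ≤ e * ‖w t‖) :
    ‖tn M S w‖ ≤ ‖(tn M (ContinuousLinearMap.id ℝ (H n)) : EE n σ →L[ℝ] EE n σ)‖ * (e * ‖w‖) := by
  have : tn M S w = tn M (ContinuousLinearMap.id ℝ (H n)) (tn 1 S w) := by
    rw [tn_mul, mul_one]; rfl
  rw [this]
  refine (ContinuousLinearMap.le_opNorm _ _).trans ?_
  gcongr
  refine le_of_sq_le_sq ?_ (by positivity)
  rw [mul_pow, norm_sq_EE, norm_sq_EE, Finset.mul_sum]
  refine Finset.sum_le_sum fun t _ => ?_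
  rw [tn_apply, ← mul_pow, Finset.sum_eq_single t]
  · simp only [one_apply_eq, one_smul]; gcongr; exact h t
  · intro t' _ ht; simp [Matrix.one_apply_ne ht.symm]
  · simp

theorem TT_bound [DecidableEq σ] {G C : Fin n → Matrix σ σ ℝ} (h : Sys G C) :
    ∃ (c : ℝ) (K : ℕ), 0 < c ∧ ∀ w : EE n σ, (∀ t, sup_ge K (w t)) →
      c * ‖w‖ ≤ ‖TT (fun i => G i + C i) w‖ := by
  obtain ⟨c, m, hc, hb⟩ := DD_bound h
  set B : Fin n → Matrix σ σ ℝ := fun i => G i + C i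
  set m' := ∑ i, (‖(tn (B i) (ContinuousLinearMap.id ℝ (H n)) : EE n σ →L[ℝ] EE n σ)‖ +
    ‖(tn (B i)ᵀ (ContinuousLinearMap.id ℝ (H n)) : EE n σ →L[ℝ] EE n σ)‖)
  have hm' : 0 ≤ m' := by positivity
  have hDD : DD G C = ∑ i, (tn (B i) (al i) - tn (B i)ᵀ (be i)) := by
    unfold DD
    refine Finset.sum_congr rfl fun i _ => ?_
    simp only [B, transpose_add, h.Gs, h.Cs, tn_add, tn_neg, ph, yh, tn_add_right, tn_sub_right]
    abel
  have hdiff : ∀ K : ℕ, ∀ w : EE n σ, (∀ t, sup_ge (K + 1) (w t)) →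
      ‖TT B w - DD G C w‖ ≤ m' * (((K : ℝ) + 1)⁻¹ * ‖w‖) := by
    intro K w hw
    have : TT B w - DD G C w = ∑ i, (tn (B i) (lo ok_ff i - al i) w - tn (B i)ᵀ (hi ok_ff i - be i) w) := by
      rw [hDD, TT]
      simp only [tn_sub_right, ContinuousLinearMap.sum_apply, ContinuousLinearMap.sub_apply,
        ← Finset.sum_sub_distrib]
      refine Finset.sum_congr rfl fun i _ => ?_
      abel
    rw [this, Finset.sum_mul]
    refine (norm_sum_le _ _).trans (Finset.sum_le_sum fun i _ => (norm_sub_le _ _).trans ?_)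
    rw [add_mul]
    gcongr
    · exact tn_norm_le _ _ _ (by positivity) w fun t => lo_diff K i _ (hw t)
    · exact tn_norm_le _ _ _ (by positivity) w fun t => hi_diff K i _ (hw t)
  have hR : ∀ K : ℕ, ∀ w : EE n σ, (∀ t, sup_ge (K + 1) (w t)) →
      ‖tn 1 RO w‖ ^ 2 ≤ ((K : ℝ) + 1)⁻¹ * ‖w‖ ^ 2 := by
    intro K w hw
    rw [norm_sq_EE, norm_sq_EE, Finset.mul_sum]
    refine Finset.sum_le_sum fun t _ => ?_
    have e : tn 1 RO w t = RO (w t) := by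
      rw [tn_apply, Finset.sum_eq_single t]
      · simp
      · intro t' _ ht; simp [Matrix.one_apply_ne ht.symm]
      · simp
    rw [e]
    have hs : √((K : ℝ) + 1)⁻¹ ^ 2 = ((K : ℝ) + 1)⁻¹ := Real.sq_sqrt (by positivity)
    rw [← hs, ← mul_pow]
    gcongr
    refine wc_norm_le (w t) _ id _ (by positivity) ?_ Function.injective_id.injOn
    intro a
    by_cases ha : lev a < K + 1
    · rw [RO_apply, hw t a ha]; simp; positivity
    · rw [RO_apply, abs_mul, abs_of_pos (RR_pos a)]
      simp only [id]
      gcongr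
      unfold RR
      rw [← Real.sqrt_inv]
      have : K ≤ lev a := by omega
      gcongr
  obtain ⟨K, hK⟩ := exists_nat_gt (max (2 * |m| / c) (4 * m' / √(c / 2)))
  have hsc : 0 < √(c / 2) := by positivity
  have hK1 : |m| * ((K : ℝ) + 1)⁻¹ ≤ c / 2 := by
    have := (le_max_left _ _).trans hK.le
    rw [div_le_iff₀ hc] at this
    rw [mul_inv_le_iff₀ (by positivity)]; nlinarith
  have hK2 : m' * ((K : ℝ) + 1)⁻¹ ≤ √(c / 2) / 2 := by
    have := (le_max_right _ _).trans hK.le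
    rw [div_le_iff₀ hsc] at this
    rw [mul_inv_le_iff₀ (by positivity)]; nlinarith
  refine ⟨√(c / 2) / 2, K + 1, by positivity, fun w hw => ?_⟩
  have h1 : √(c / 2) * ‖w‖ ≤ ‖DD G C w‖ := by
    refine le_of_sq_le_sq ?_ (by positivity)
    rw [mul_pow, Real.sq_sqrt (by positivity)]
    have h2 := hb w
    have h3 := hR K w hw
    have h4 : m * ‖tn 1 RO w‖ ^ 2 ≤ c / 2 * ‖w‖ ^ 2 := by
      calc _ ≤ |m| * (((K : ℝ) + 1)⁻¹ * ‖w‖ ^ 2) := by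
            gcongr; exact le_abs_self m
        _ = (|m| * ((K : ℝ) + 1)⁻¹) * ‖w‖ ^ 2 := by ring
        _ ≤ _ := by gcongr
    linarith
  have h2 := hdiff K w hw
  have h3 : ‖DD G C w‖ ≤ ‖TT B w‖ + ‖TT B w - DD G C w‖ := norm_le_insert _ _
  have h4 : m' * (((K : ℝ) + 1)⁻¹ * ‖w‖) ≤ √(c / 2) / 2 * ‖w‖ := by
    rw [← mul_assoc]; gcongr
  linarith
end cmp
end HR

namespace HR

section rst
variable {X : Type*} [NormedAddCommGroup X] [InnerProductSpace ℝ X]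

noncomputable def rst (T : X →L[ℝ] X) (P Q : Submodule ℝ X) (h : ∀ w ∈ P, T w ∈ Q) : P →L[ℝ] Q :=
  (T.comp P.subtypeL).codRestrict Q fun w => h w w.2

theorem rst_coe (T : X →L[ℝ] X) (P Q : Submodule ℝ X) (h : ∀ w ∈ P, T w ∈ Q) (w : P) :
    (rst T P Q h w : X) = T w := rfl

theorem rst_adj (T : X →L[ℝ] X) (P Q : Submodule ℝ X) [CompleteSpace P] [CompleteSpace Q]
    (h : ∀ w ∈ P, T w ∈ Q) (h' : ∀ w ∈ Q, T w ∈ P)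
    (hs : ∀ u v, inner ℝ (T u) v = - inner ℝ u (T v)) :
    ContinuousLinearMap.adjoint (rst T P Q h) = - rst T Q P h' := by
  symm
  rw [ContinuousLinearMap.eq_adjoint_iff]
  intro u v
  rw [Submodule.coe_inner, Submodule.coe_inner, ContinuousLinearMap.neg_apply, Submodule.coe_neg,
    rst_coe, rst_coe, inner_neg_left, hs, neg_neg]

theorem rst_map (T : X →L[ℝ] X) (P Q : Submodule ℝ X) (h : ∀ w ∈ P, T w ∈ Q) :
    (T.ker ⊓ P : Submodule ℝ X) = (rst T P Q h).ker.map P.subtype := by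
  ext w
  constructor
  · rintro ⟨h1, h2⟩
    refine ⟨⟨w, h2⟩, ?_, rfl⟩
    exact Subtype.ext h1
  · rintro ⟨⟨w', h2⟩, h1, rfl⟩
    exact ⟨congrArg Subtype.val h1, h2⟩

theorem rst_fd (T : X →L[ℝ] X) (P Q : Submodule ℝ X) (h : ∀ w ∈ P, T w ∈ Q)
    (hfd : FiniteDimensional ℝ (rst T P Q h).ker) : FiniteDimensional ℝ (T.ker ⊓ P : Submodule ℝ X) := by
  rw [rst_map T P Q h]
  infer_instance

theorem rst_ker (T : X →L[ℝ] X) (P Q : Submodule ℝ X) (h : ∀ w ∈ P, T w ∈ Q) :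
    Module.finrank ℝ (rst T P Q h).ker = Module.finrank ℝ (T.ker ⊓ P : Submodule ℝ X) := by
  rw [rst_map T P Q h]
  exact (Submodule.equivMapOfInjective _ P.injective_subtype _).finrank_eq
end rst

section par
variable {n : ℕ} {σ : Type} [Fintype σ]

/-- formal Dirac operator -/
noncomputable def Df (B : Fin n → Matrix σ σ ℝ) (u : σ → I n → ℝ) : σ → I n → ℝ :=
  fun s => ∑ i, ∑ t, (B i s t • an i (u t) - B i t s • cr i (u t))

noncomputable def ffu (w : EE n σ) : σ → I n → ℝ := fun t b => ff b * w t b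

theorem TT_apply (B : Fin n → Matrix σ σ ℝ) (w : EE n σ) (s : σ) (a : I n) :
    TT B w s a = ff a * Df B (ffu w) s a := by
  simp only [TT, Df, ContinuousLinearMap.sum_apply, ContinuousLinearMap.sub_apply, WithLp.ofLp_sum,
    Finset.sum_apply, WithLp.ofLp_sub, Pi.sub_apply, tn_apply, lp.coeFn_sum, lp.coeFn_sub, lp.coeFn_smul,
    Pi.smul_apply, lo_apply, hi_apply, smul_eq_mul, transpose_apply, Finset.mul_sum, ffu, mul_sub,
    Finset.sum_sub_distrib]
  congr 1 <;> refine Finset.sum_congr rfl fun i _ => Finset.sum_congr rfl fun t _ => ?_ <;> ring_nf <;> rfl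

def Ep (n : ℕ) (σ : Type) [Fintype σ] (p : ℕ) : Submodule ℝ (EE n σ) where
  carrier := {w | ∀ s a, lev a % 2 ≠ p → w s a = 0}
  zero_mem' := fun s a _ => rfl
  add_mem' := fun {u v} hu hv s a ha => by
    rw [PiLp.add_apply, lp.coeFn_add, Pi.add_apply, hu s a ha, hv s a ha, add_zero]
  smul_mem' := fun r u hu s a ha => by
    rw [PiLp.smul_apply, lp.coeFn_smul, Pi.smul_apply, hu s a ha, smul_zero]

theorem Ep_closed (p : ℕ) : IsClosed (Ep n σ p : Set (EE n σ)) := by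
  have : (Ep n σ p : Set (EE n σ)) = ⋂ s, ⋂ a, ⋂ (_ : lev a % 2 ≠ p),
      {w : EE n σ | lp.evalCLM ℝ (fun _ : I n => ℝ) 2 a (w s) = 0} := by
    ext w; simp only [Set.mem_iInter]; rfl
  rw [this]
  refine isClosed_iInter fun s => isClosed_iInter fun a => isClosed_iInter fun _ => ?_
  exact isClosed_eq (by fun_prop) (by fun_prop)

instance (p : ℕ) : CompleteSpace (Ep n σ p) := (Ep_closed p).completeSpace_coe

theorem TT_mem (B : Fin n → Matrix σ σ ℝ) (p q : ℕ) (h : ∀ m, (m + 1) % 2 = p → m % 2 = q)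
    (h' : ∀ m, m % 2 = p → (m + 1) % 2 = q) (w : EE n σ)
    (hw : w ∈ Ep n σ p) : TT B w ∈ Ep n σ q := by
  intro s a ha
  rw [TT_apply]
  have e1 : ∀ i t, an i (ffu w t) a = 0 := fun i t => by
    rw [an_apply, ffu, hw t (up i a) (fun h2 => ha (h _ (by rwa [lev_up] at h2)))]; simp
  have e2 : ∀ i t, cr i (ffu w t) a = 0 := fun i t => by
    rw [cr_apply]
    by_cases h0 : a i = 0
    · simp [h0]
    · rw [ffu, hw t (dn i a) (fun h2 => ha (by rw [← lev_dn i a h0]; exact h' _ h2))]; simp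
  simp [Df, Finset.sum_apply, e1, e2]

theorem TT_mem01 (B : Fin n → Matrix σ σ ℝ) (w : EE n σ) (hw : w ∈ Ep n σ 0) : TT B w ∈ Ep n σ 1 :=
  TT_mem B 0 1 (by omega) (by omega) w hw
theorem TT_mem10 (B : Fin n → Matrix σ σ ℝ) (w : EE n σ) (hw : w ∈ Ep n σ 1) : TT B w ∈ Ep n σ 0 :=
  TT_mem B 1 0 (by omega) (by omega) w hw

noncomputable def KK (B : Fin n → Matrix σ σ ℝ) (p : ℕ) : Submodule ℝ (EE n σ) := (TT B).ker ⊓ Ep n σ p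
noncomputable def ix (B : Fin n → Matrix σ σ ℝ) : ℤ :=
  (Module.finrank ℝ (KK B 0) : ℤ) - Module.finrank ℝ (KK B 1)

noncomputable def Te (B : Fin n → Matrix σ σ ℝ) : Ep n σ 0 →L[ℝ] Ep n σ 1 := rst (TT B) _ _ (TT_mem01 B)
noncomputable def To (B : Fin n → Matrix σ σ ℝ) : Ep n σ 1 →L[ℝ] Ep n σ 0 := rst (TT B) _ _ (TT_mem10 B)

theorem Te_adj (B : Fin n → Matrix σ σ ℝ) : ContinuousLinearMap.adjoint (Te B) = - To B :=
  rst_adj _ _ _ _ _ (TT_skew B)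

theorem idx_Te (B : Fin n → Matrix σ σ ℝ) : idx (Te B) = ix B := by
  unfold idx ix
  rw [Te_adj]
  have : (-To B).ker = (To B).ker := by ext w; simp
  rw [this, Te, To, rst_ker, rst_ker]
  rfl

theorem fin_lev (K : ℕ) : Finite {a : I n // lev a < K} := by
  refine Set.Finite.subset (Set.finite_Iic (fun _ : Fin n => K)) fun a ha i => ?_
  have := le_lev i a
  have h2 : lev a < K := ha
  show a i ≤ K
  omega

theorem FB_rst [DecidableEq σ] {G C : Fin n → Matrix σ σ ℝ} (h : Sys G C) (P Q : Submodule ℝ (EE n σ))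
    (hm : ∀ w ∈ P, TT (fun i => G i + C i) w ∈ Q) : FB (rst (TT fun i => G i + C i) P Q hm) := by
  obtain ⟨c, K, hc, hb⟩ := TT_bound h
  have := fin_lev (n := n) K
  let f : P →ₗ[ℝ] (σ → {a : I n // lev a < K} → ℝ) :=
    { toFun := fun w s a => (w : EE n σ) s a.1
      map_add' := fun u v => rfl
      map_smul' := fun r u => rfl }
  have hf : ∀ w : P, w ∈ LinearMap.ker f ↔ ∀ s a, lev a < K → (w : EE n σ) s a = 0 := by
    intro w
    constructor
    · intro hw s a ha
      exact congrFun (congrFun hw s) ⟨a, ha⟩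
    · intro hw
      funext s a
      exact hw s a a.2
  refine ⟨c, LinearMap.ker f, hc, ?_, ?_, ?_⟩
  · have : ((LinearMap.ker f : Submodule ℝ P) : Set P) = ⋂ s, ⋂ a, ⋂ (_ : lev a < K),
        {w : P | lp.evalCLM ℝ (fun _ : I n => ℝ) 2 a ((w : EE n σ) s) = 0} := by
      ext w; simp only [Set.mem_iInter]; exact hf w
    rw [this]
    refine isClosed_iInter fun s => isClosed_iInter fun a => isClosed_iInter fun _ => ?_
    exact isClosed_eq (by fun_prop) (by fun_prop)
  · exact Module.Finite.equiv f.quotKerEquivRange.symm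
  · intro w hw
    exact hb w fun t a ha => (hf w).1 hw t a ha

theorem FB.neg {X Y : Type*} [NormedAddCommGroup X] [InnerProductSpace ℝ X] [CompleteSpace X]
  [NormedAddCommGroup Y] [InnerProductSpace ℝ Y] [CompleteSpace Y] {T : X →L[ℝ] Y} (h : FB T) : FB (-T) := by
  obtain ⟨c, Z, h1, h2, h3, h4⟩ := h
  exact ⟨c, Z, h1, h2, h3, fun w hw => by simpa using h4 w hw⟩

theorem FB_Te [DecidableEq σ] {G C : Fin n → Matrix σ σ ℝ} (h : Sys G C) : FB (Te fun i => G i + C i) :=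
  FB_rst h _ _ _
theorem FB_To [DecidableEq σ] {G C : Fin n → Matrix σ σ ℝ} (h : Sys G C) : FB (To fun i => G i + C i) :=
  FB_rst h _ _ _

theorem fd_KK0 [DecidableEq σ] {G C : Fin n → Matrix σ σ ℝ} (h : Sys G C) :
    FiniteDimensional ℝ (KK (fun i => G i + C i) 0) := by
  have h1 : FiniteDimensional ℝ (Te fun i => G i + C i).ker := FB.fd_ker (FB_Te h)
  have h2 := rst_fd (TT fun i => G i + C i) (Ep n σ 0) (Ep n σ 1) (TT_mem01 _)
  unfold Te at h1
  exact h2 h1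

theorem fd_KK1 [DecidableEq σ] {G C : Fin n → Matrix σ σ ℝ} (h : Sys G C) :
    FiniteDimensional ℝ (KK (fun i => G i + C i) 1) := by
  have h1 : FiniteDimensional ℝ (To fun i => G i + C i).ker := FB.fd_ker (FB_To h)
  have h2 := rst_fd (TT fun i => G i + C i) (Ep n σ 1) (Ep n σ 0) (TT_mem10 _)
  unfold To at h1
  exact h2 h1

theorem TT_affine (B₀ B₁ : Fin n → Matrix σ σ ℝ) (x y : ℝ) :
    TT (fun i => x • B₀ i + y • B₁ i) = x • TT B₀ + y • TT B₁ := by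
  simp only [TT, tn_add, tn_smul, transpose_add, transpose_smul, Finset.smul_sum, ← Finset.sum_add_distrib]
  refine Finset.sum_congr rfl fun i _ => ?_
  simp only [smul_sub]; abel

theorem ix_path [DecidableEq σ] {G C₀ C₁ : Fin n → Matrix σ σ ℝ}
    (h : ∀ x : ℝ, Sys G (fun i => (1 - x) • C₀ i + x • C₁ i)) :
    ix (fun i => G i + C₀ i) = ix (fun i => G i + C₁ i) := by
  let B : ℝ → Fin n → Matrix σ σ ℝ := fun x i => G i + ((1 - x) • C₀ i + x • C₁ i)
  have hB : ∀ x, Te (B x) = (1 - x) • Te (fun i => G i + C₀ i) + x • Te (fun i => G i + C₁ i) := by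
    intro x
    have : B x = fun i => (1 - x) • (G i + C₀ i) + x • (G i + C₁ i) := by
      funext i; simp only [B]; module
    ext w : 2
    rw [this]
    change TT _ (w : EE n σ) = (1 - x) • TT _ (w : EE n σ) + x • TT _ (w : EE n σ)
    rw [TT_affine]; rfl
  have hcont : Continuous fun x => Te (B x) := by
    simp_rw [hB]; fun_prop
  have hfb : ∀ x, FB (Te (B x)) := fun x => FB_Te (h x)
  have hfb' : ∀ x, FB (ContinuousLinearMap.adjoint (Te (B x))) := fun x => by
    rw [Te_adj]; exact (FB_To (h x)).neg
  have hlc : IsLocallyConstant fun x => idx (Te (B x)) := by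
    rw [IsLocallyConstant.iff_eventually_eq]
    intro x
    have := (hcont.tendsto x).eventually (idx_nhds (Te (B x)) (hfb x) (hfb' x))
    filter_upwards [this] with y hy
    exact hy (hfb y) (hfb' y)
  have := hlc.apply_eq_of_preconnectedSpace 0 1
  simp only [idx_Te] at this
  have e0 : B 0 = fun i => G i + C₀ i := by funext i; simp [B]
  have e1 : B 1 = fun i => G i + C₁ i := by funext i; simp [B]
  rwa [e0, e1] at this
end par
end HR

namespace HR

theorem slf {V : Type*} [AddCommGroup V] [Module ℝ V] (S : V) (h : S = - S) : S = 0 := by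
  have : (2 : ℝ) • S = 0 := by rw [two_smul]; nth_rewrite 2 [h]; exact add_neg_cancel S
  exact (smul_eq_zero.1 this).resolve_left two_ne_zero

theorem half {V : Type*} [AddCommGroup V] [Module ℝ V] [FiniteDimensional ℝ V] (P : Submodule ℝ V)
    (Q R : V →ₗ[ℝ] V) (hQ : ∀ v ∈ P, Q v ∈ P) (hR : ∀ v ∈ P, R v ∈ P) (hQQ : ∀ v, Q (Q v) = v)
    (hRR : ∀ v, R (R v) = v) (hQR : ∀ v, Q (R v) = - R (Q v)) (P' : Submodule ℝ V)
    (hP' : ∀ v, v ∈ P' ↔ v ∈ P ∧ Q v = v) :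
    2 * Module.finrank ℝ P' = Module.finrank ℝ P := by
  let N : Submodule ℝ V := P'.map R
  have hN : ∀ v, v ∈ N ↔ v ∈ P ∧ Q v = - v := by
    intro v
    constructor
    · rintro ⟨v, hv, rfl⟩
      obtain ⟨h1, h2⟩ := (hP' v).1 hv
      exact ⟨hR v h1, by rw [hQR, h2]⟩
    · rintro ⟨h1, h2⟩
      exact ⟨R v, (hP' _).2 ⟨hR v h1, by rw [hQR, h2, map_neg, neg_neg]⟩, hRR v⟩
  have hinj : Function.Injective R := fun a b h => by rw [← hRR a, h, hRR]
  have hf : Module.finrank ℝ N = Module.finrank ℝ P' :=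
    (Submodule.equivMapOfInjective R hinj P').finrank_eq.symm
  have hsup : P' ⊔ N = P := by
    apply le_antisymm
    · exact sup_le (fun v hv => ((hP' v).1 hv).1) (fun v hv => ((hN v).1 hv).1)
    · intro v hv
      have : v = (1 / 2 : ℝ) • (v + Q v) + (1 / 2 : ℝ) • (v - Q v) := by module
      rw [this]
      refine Submodule.add_mem_sup ?_ ?_
      · refine (hP' _).2 ⟨P.smul_mem _ (P.add_mem hv (hQ v hv)), ?_⟩
        simp [hQQ, add_comm]
      · refine (hN _).2 ⟨P.smul_mem _ (P.sub_mem hv (hQ v hv)), ?_⟩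
        simp only [map_smul, map_sub, hQQ]; module
  have hinf : P' ⊓ N = ⊥ := by
    rw [eq_bot_iff]
    rintro v ⟨h1, h2⟩
    have e1 := ((hP' v).1 h1).2
    have e2 := ((hN v).1 h2).2
    rw [e1] at e2
    exact (Submodule.mem_bot ℝ).2 (slf _ e2)
  have := Submodule.finrank_sup_add_finrank_inf_eq P' N
  rw [hsup, hinf, finrank_bot, hf] at this
  omega

theorem ring_sq {R : Type*} [Ring R] [Module ℝ R] {n : ℕ} (b c x y : Fin n → R)
    (bx : ∀ i j, b i * x j = x j * b i) (by' : ∀ i j, b i * y j = y j * b i)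
    (cx : ∀ i j, c i * x j = x j * c i) (cy : ∀ i j, c i * y j = y j * c i)
    (bb : ∀ i j, b i * b j + b j * b i = 0) (cc : ∀ i j, c i * c j + c j * c i = 0)
    (bc : ∀ i j, b i * c j + c j * b i = if i = j then 4 else 0)
    (xx : ∀ i j, x i * x j = x j * x i) (yy : ∀ i j, y i * y j = y j * y i)
    (xy : ∀ i j, x i * y j = y j * x i + if i = j then 1 else 0) :
    (∑ i, (b i * x i - c i * y i)) * (∑ i, (b i * x i - c i * y i)) =
      - (4 * ∑ i, y i * x i + ∑ i, b i * c i) := by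
  have two : ∀ S : R, S = - S → S = 0 := fun S h => slf S h
  have anti : ∀ (b x : Fin n → R), (∀ i j, b i * x j = x j * b i) → (∀ i j, b i * b j + b j * b i = 0) →
      (∀ i j, x i * x j = x j * x i) → ∑ i, ∑ j, (b i * x i) * (b j * x j) = 0 := by
    intro b x bx bb xx
    apply two
    conv_lhs => rw [Finset.sum_comm]
    simp only [← Finset.sum_neg_distrib]
    refine Finset.sum_congr rfl fun i _ => Finset.sum_congr rfl fun j _ => ?_
    calc b j * x j * (b i * x i) = b j * (x j * b i) * x i := by noncomm_ring
      _ = (b j * b i) * (x j * x i) := by rw [← bx]; noncomm_ring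
      _ = - (b i * b j) * (x i * x j) := by rw [eq_neg_of_add_eq_zero_left (bb j i), xx]
      _ = - (b i * (b j * x i) * x j) := by noncomm_ring
      _ = _ := by rw [bx j i]; noncomm_ring
  have e1 := anti b x bx bb xx
  have e2 := anti c y cy cc yy
  have e3 : ∑ i, ∑ j, ((b i * x i) * (c j * y j) + (c j * y j) * (b i * x i)) =
      4 * ∑ i, y i * x i + ∑ i, b i * c i := by
    rw [Finset.mul_sum, ← Finset.sum_add_distrib]
    refine Finset.sum_congr rfl fun i _ => ?_
    have : ∀ j, ((b i * x i) * (c j * y j) + (c j * y j) * (b i * x i)) =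
        if i = j then 4 * (y i * x i) + b i * c i else 0 := by
      intro j
      calc _ = b i * (x i * c j) * y j + c j * (y j * b i) * x i := by noncomm_ring
        _ = b i * c j * (x i * y j) + c j * b i * (y j * x i) := by rw [← cx, ← by']; noncomm_ring
        _ = (b i * c j + c j * b i) * (y j * x i) + b i * c j * (if i = j then 1 else 0) := by
            rw [xy]; noncomm_ring
        _ = _ := by
            rw [bc]; split_ifs with h
            · subst h; simp
            · simp
    simp [this]
  rw [Finset.sum_mul_sum]
  have : ∀ i j, (b i * x i - c i * y i) * (b j * x j - c j * y j) =
      (b i * x i) * (b j * x j) + (c i * y i) * (c j * y j)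
        - ((b i * x i) * (c j * y j) + (c i * y i) * (b j * x j)) := fun i j => by noncomm_ring
  simp only [this, Finset.sum_sub_distrib, Finset.sum_add_distrib, e1, e2]
  rw [← e3]
  simp only [Finset.sum_add_distrib]
  rw [Finset.sum_comm (f := fun i j => c i * y i * (b j * x j))]
  abel

section osc
variable {n : ℕ} {σ : Type} [Fintype σ] [DecidableEq σ]

noncomputable def fmm (M : Matrix σ σ ℝ) : Module.End ℝ (σ → I n → ℝ) where
  toFun u := fun s => ∑ t, M s t • u t
  map_add' u v := by funext s; simp [Finset.sum_add_distrib]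
  map_smul' r u := by funext s; simp only [Pi.smul_apply, Finset.smul_sum, RingHom.id_apply]; exact Finset.sum_congr rfl fun t _ => smul_comm _ _ _

noncomputable def fll (S : (I n → ℝ) →ₗ[ℝ] (I n → ℝ)) : Module.End ℝ (σ → I n → ℝ) where
  toFun u := fun s => S (u s)
  map_add' u v := by funext s; simp
  map_smul' r u := by funext s; simp

theorem fmm_apply (M : Matrix σ σ ℝ) (u : σ → I n → ℝ) (s : σ) : fmm M u s = ∑ t, M s t • u t := rfl
theorem fll_apply (S : (I n → ℝ) →ₗ[ℝ] (I n → ℝ)) (u : σ → I n → ℝ) (s : σ) : fll S u s = S (u s) := rfl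

theorem fmm_mul (M M' : Matrix σ σ ℝ) : (fmm M * fmm M' : Module.End ℝ (σ → I n → ℝ)) = fmm (M * M') := by
  refine LinearMap.ext fun u => funext fun s => ?_
  simp only [Module.End.mul_apply, fmm_apply, Finset.smul_sum, smul_smul, Matrix.mul_apply, Finset.sum_smul]
  rw [Finset.sum_comm]
theorem fmm_add (M M' : Matrix σ σ ℝ) : (fmm (M + M') : Module.End ℝ (σ → I n → ℝ)) = fmm M + fmm M' := by
  refine LinearMap.ext fun u => funext fun s => ?_
  simp [fmm_apply, add_smul, Finset.sum_add_distrib]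
theorem fmm_smul (r : ℝ) : (fmm (r • 1 : Matrix σ σ ℝ) : Module.End ℝ (σ → I n → ℝ)) = r • 1 := by
  refine LinearMap.ext fun u => funext fun s => ?_
  rw [fmm_apply, Finset.sum_eq_single s]
  · simp
  · intro t _ h; simp [Matrix.one_apply_ne h.symm]
  · simp
theorem fmm_fll (M : Matrix σ σ ℝ) (S : (I n → ℝ) →ₗ[ℝ] (I n → ℝ)) : fmm M * fll S = fll S * fmm M := by
  refine LinearMap.ext fun u => funext fun s => ?_
  simp [fmm_apply, fll_apply]

theorem Df_eq (B : Fin n → Matrix σ σ ℝ) (u : σ → I n → ℝ) :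
    Df B u = (∑ i, (fmm (B i) * fll (an i) - fmm (B i)ᵀ * fll (cr i)) : Module.End ℝ (σ → I n → ℝ)) u := by
  funext s
  simp only [Df, LinearMap.sum_apply, LinearMap.sub_apply, Finset.sum_apply, Pi.sub_apply,
    Module.End.mul_apply, fmm_apply, fll_apply, transpose_apply, Finset.sum_sub_distrib]

theorem Df_Df {G C : Fin n → Matrix σ σ ℝ} (h : Sys G C)
    (hC : ∀ i j, C i * C j + C j * C i = (if i = j then (-2 : ℝ) else 0) • 1) (u : σ → I n → ℝ) :
    Df (fun i => G i + C i) (Df (fun i => G i + C i) u) =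
      - ((4 : ℝ) • ∑ i, fll (cr i * an i) u + ∑ i, fmm ((G i + C i) * (G i + C i)ᵀ) u) := by
  have bt : ∀ i, (G i + C i)ᵀ = G i - C i := fun i => by
    rw [transpose_add, h.Gs, h.Cs, sub_eq_add_neg]
  rw [Df_eq, Df_eq, ← Module.End.mul_apply, ring_sq]
  · simp only [LinearMap.neg_apply, LinearMap.add_apply, LinearMap.sum_apply, Module.End.mul_apply, fmm_mul]
    congr 2
    rw [Module.End.ofNat_apply, ← Nat.cast_smul_eq_nsmul ℝ]
    rfl
  · intros; exact fmm_fll _ _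
  · intros; exact fmm_fll _ _
  · intros; exact fmm_fll _ _
  · intros; exact fmm_fll _ _
  · intro i j
    have : (G i + C i) * (G j + C j) + (G j + C j) * (G i + C i) = (0 : ℝ) • 1 := by
      have e1 := h.Gr i j
      have e2 := hC i j
      have e3 := h.GC i j
      have e4 := h.GC j i
      calc _ = (G i * G j + G j * G i) + (C i * C j + C j * C i) + (G i * C j + C j * G i)
            + (G j * C i + C i * G j) := by noncomm_ring
        _ = _ := by rw [e1, e2, e3, e4]; split_ifs <;> simp [← add_smul]
    rw [fmm_mul, fmm_mul, ← fmm_add, this, fmm_smul, zero_smul]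
  · intro i j
    have : (G i + C i)ᵀ * (G j + C j)ᵀ + (G j + C j)ᵀ * (G i + C i)ᵀ = (0 : ℝ) • 1 := by
      have e1 := h.Gr i j
      have e2 := hC i j
      have e3 := h.GC i j
      have e4 := h.GC j i
      rw [bt, bt]
      calc _ = (G i * G j + G j * G i) + (C i * C j + C j * C i) - (G i * C j + C j * G i)
            - (G j * C i + C i * G j) := by noncomm_ring
        _ = _ := by rw [e1, e2, e3, e4]; split_ifs <;> simp [← add_smul]
    rw [fmm_mul, fmm_mul, ← fmm_add, this, fmm_smul, zero_smul]
  · intro i j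
    have : (G i + C i) * (G j + C j)ᵀ + (G j + C j)ᵀ * (G i + C i) = (if i = j then (4 : ℝ) else 0) • 1 := by
      have e1 := h.Gr i j
      have e2 := hC i j
      have e3 := h.GC i j
      have e4 := h.GC j i
      rw [bt]
      calc _ = (G i * G j + G j * G i) - (C i * C j + C j * C i) - (G i * C j + C j * G i)
            + (G j * C i + C i * G j) := by noncomm_ring
        _ = _ := by
          rw [e1, e2, e3, e4]; split_ifs
          · simp only [← sub_smul]; norm_num
          · simp
    rw [fmm_mul, fmm_mul, ← fmm_add, this, fmm_smul]
    split_ifs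
    · refine LinearMap.ext fun u => ?_
      change (4 : ℝ) • u = (4 : ℕ) • u
      rw [← Nat.cast_smul_eq_nsmul ℝ]; rfl
    · simp
  · intro i j
    refine LinearMap.ext fun u => funext fun s => ?_
    exact an_an i j (u s)
  · intro i j
    refine LinearMap.ext fun u => funext fun s => ?_
    exact cr_cr i j (u s)
  · intro i j
    refine LinearMap.ext fun u => funext fun s => ?_
    have := an_cr i j (u s)
    split_ifs at this ⊢ with hh
    · exact this
    · rw [add_zero] at this ⊢; exact this

theorem Df_zero {G C : Fin n → Matrix σ σ ℝ} (h : Sys G C)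
    (hC : ∀ i j, C i * C j + C j * C i = (if i = j then (-2 : ℝ) else 0) • 1) (u : σ → I n → ℝ)
    (hu : Df (fun i => G i + C i) u = 0) (a : I n) :
    (lev a ≠ 0 → ∀ s, u s a = 0) ∧ ∀ i, (G i + C i)ᵀ *ᵥ (fun s => u s a) = 0 := by
  have h1 := Df_Df h hC u
  rw [hu] at h1
  have h0 : Df (fun i => G i + C i) (0 : σ → I n → ℝ) = 0 := by rw [Df_eq, map_zero]
  rw [h0] at h1
  have h2 : ∀ s, 4 * (lev a * u s a) + ∑ i, (((G i + C i) * (G i + C i)ᵀ) *ᵥ fun s => u s a) s = 0 := by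
    intro s
    have := congrFun (congrFun h1 s) a
    simp only [Pi.zero_apply, Pi.neg_apply, Pi.add_apply, Pi.smul_apply, Finset.sum_apply, fll_apply,
      fmm_apply, smul_eq_mul, Module.End.mul_apply, cr_an_self] at this
    simp only [mulVec, dotProduct]
    linarith
  set v : σ → ℝ := fun s => u s a with hv
  have h3 : 4 * lev a * (v ⬝ᵥ v) + ∑ i, ((G i + C i)ᵀ *ᵥ v) ⬝ᵥ ((G i + C i)ᵀ *ᵥ v) = 0 := by
    have : ∑ s, v s * (4 * (lev a * u s a) + ∑ i, (((G i + C i) * (G i + C i)ᵀ) *ᵥ fun s => u s a) s) = 0 :=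
      Finset.sum_eq_zero fun s _ => by rw [h2, mul_zero]
    rw [← this]
    simp only [mul_add, Finset.sum_add_distrib, dotProduct, Finset.mul_sum]
    congr 1
    · exact Finset.sum_congr rfl fun s _ => by simp only [hv]; ring
    · rw [Finset.sum_comm]
      rw [Finset.sum_comm]
      conv_rhs => rw [Finset.sum_comm]
      refine Finset.sum_congr rfl fun i _ => ?_
      change ((G i + C i)ᵀ *ᵥ v) ⬝ᵥ ((G i + C i)ᵀ *ᵥ v) = v ⬝ᵥ (((G i + C i) * (G i + C i)ᵀ) *ᵥ v)
      rw [← mulVec_mulVec, dotProduct_mulVec v, ← mulVec_transpose]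
  have nn : ∀ x : σ → ℝ, 0 ≤ x ⬝ᵥ x := fun x => Finset.sum_nonneg fun s _ => mul_self_nonneg _
  have h4 : 0 ≤ ∑ i, ((G i + C i)ᵀ *ᵥ v) ⬝ᵥ ((G i + C i)ᵀ *ᵥ v) := Finset.sum_nonneg fun i _ => nn _
  have h5 : 0 ≤ 4 * lev a * (v ⬝ᵥ v) := mul_nonneg (by positivity) (nn v)
  constructor
  · intro hl s
    have h6 : 4 * lev a * (v ⬝ᵥ v) = 0 := by linarith
    have h7 : v ⬝ᵥ v = 0 := by
      rcases mul_eq_zero.1 h6 with h | h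
      · exfalso; apply hl; have : (lev a : ℝ) = 0 := by linarith
        exact_mod_cast this
      · exact h
    exact congrFun (dotProduct_self_eq_zero.1 h7) s
  · intro i
    have h6 : ∑ i, ((G i + C i)ᵀ *ᵥ v) ⬝ᵥ ((G i + C i)ᵀ *ᵥ v) = 0 := by linarith
    have := (Finset.sum_eq_zero_iff_of_nonneg (fun i _ => nn _)).1 h6 i (Finset.mem_univ i)
    exact dotProduct_self_eq_zero.1 this

def WW (B : Fin n → Matrix σ σ ℝ) (k : ℕ) : Submodule ℝ (σ → ℝ) where
  carrier := {v | ∀ i : Fin n, i.1 < k → (B i)ᵀ *ᵥ v = 0}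
  zero_mem' := by intro i _; simp
  add_mem' := by intro u v hu hv i hi; rw [mulVec_add, hu i hi, hv i hi, add_zero]
  smul_mem' := by intro r u hu i hi; rw [mulVec_smul, hu i hi, smul_zero]

theorem WW_dim {G C : Fin n → Matrix σ σ ℝ} (h : Sys G C)
    (hC : ∀ i j, C i * C j + C j * C i = (if i = j then (-2 : ℝ) else 0) • 1) (k : ℕ) (hk : k ≤ n) :
    2 ^ k * Module.finrank ℝ (WW (fun i => G i + C i) k) = Fintype.card σ := by
  have bt : ∀ i, (G i + C i)ᵀ = G i - C i := fun i => by
    rw [transpose_add, h.Gs, h.Cs, sub_eq_add_neg]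
  induction k with
  | zero =>
    have : WW (fun i => G i + C i) 0 = ⊤ := by
      rw [eq_top_iff]; intro v _ i hi; omega
    rw [this]; simp
  | succ k ih =>
    rw [← ih (by omega), pow_succ, mul_assoc]
    congr 1
    let q : Fin n := ⟨k, hk⟩
    have gg : G q * G q = 1 := by
      have := h.Gr q q
      rw [if_pos rfl, ← two_smul ℝ (G q * G q)] at this
      exact smul_right_injective _ (two_ne_zero) this
    have cc : C q * C q = -1 := by
      have := hC q q
      rw [if_pos rfl, ← two_smul ℝ (C q * C q), neg_smul, ← smul_neg] at this
      exact smul_right_injective _ (two_ne_zero) this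
    have gc := h.GC q q
    have ggn : ∀ i, i ≠ q → G i * G q = - (G q * G i) := fun i hi => by
      have := h.Gr i q
      rw [if_neg hi, zero_smul] at this
      exact eq_neg_of_add_eq_zero_left this
    have ccn : ∀ i, i ≠ q → C i * C q = - (C q * C i) := fun i hi => by
      have := hC i q
      rw [if_neg hi, zero_smul] at this
      exact eq_neg_of_add_eq_zero_left this
    have cg : ∀ i j, C i * G j = - (G j * C i) := fun i j => by rw [h.GC, neg_neg]
    have key : ∀ M : Matrix σ σ ℝ, (∀ i, i ≠ q → ∃ M', (G i - C i) * M = M' * (G i - C i)) →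
        ∀ v ∈ WW (fun i => G i + C i) k, M.mulVecLin v ∈ WW (fun i => G i + C i) k := by
      intro M hM v hv i hi
      have hiq : i ≠ q := by rintro rfl; simp [q] at hi
      obtain ⟨M', e⟩ := hM i hiq
      have hv' := hv i hi
      simp only [bt] at hv' ⊢
      rw [mulVecLin_apply, mulVec_mulVec, e, ← mulVec_mulVec, hv', mulVec_zero]
    refine half (WW (fun i => G i + C i) k) (G q * C q).mulVecLin (G q).mulVecLin ?_ ?_ ?_ ?_ ?_ _ ?_
    · refine key _ fun i hi => ⟨G q * C q, ?_⟩
      calc (G i - C i) * (G q * C q) = (G i * G q) * C q - (C i * G q) * C q := by noncomm_ring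
        _ = - (G q * (G i * C q)) + G q * (C i * C q) := by rw [ggn i hi, cg]; noncomm_ring
        _ = _ := by rw [h.GC, ccn i hi]; noncomm_ring
    · refine key _ fun i hi => ⟨- G q, ?_⟩
      rw [sub_mul, ggn i hi, cg]; noncomm_ring
    · intro v
      have : G q * C q * (G q * C q) = 1 := by
        calc G q * C q * (G q * C q) = G q * (C q * G q) * C q := by noncomm_ring
          _ = - (G q * G q) * (C q * C q) := by rw [cg]; noncomm_ring
          _ = 1 := by rw [gg, cc]; simp
      rw [mulVecLin_apply, mulVecLin_apply, mulVec_mulVec, this, one_mulVec]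
    · intro v
      rw [mulVecLin_apply, mulVecLin_apply, mulVec_mulVec, gg, one_mulVec]
    · intro v
      rw [mulVecLin_apply, mulVecLin_apply, mulVecLin_apply, mulVecLin_apply, mulVec_mulVec, mulVec_mulVec,
        ← neg_mulVec]
      congr 1
      rw [mul_assoc, cg, mul_neg]
    · intro v
      have hq : (G q - C q) *ᵥ v = 0 ↔ (G q * C q) *ᵥ v = v := by
        constructor
        · intro hv
          have : G q *ᵥ ((G q - C q) *ᵥ v) = 0 := by rw [hv, mulVec_zero]
          rw [mulVec_mulVec, mul_sub, gg, sub_mulVec, one_mulVec, sub_eq_zero] at this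
          exact this.symm
        · intro hv
          have : (1 - G q * C q) *ᵥ v = 0 := by rw [sub_mulVec, one_mulVec, hv, sub_self]
          have e : G q - C q = G q * (1 - G q * C q) := by
            rw [mul_sub, mul_one, ← mul_assoc, gg, one_mul]
          rw [e, ← mulVec_mulVec, this, mulVec_zero]
      constructor
      · intro hv
        refine ⟨fun i hi => hv i (by omega), ?_⟩
        have := hv q (by simp [q])
        simp only [bt] at this
        exact hq.1 this
      · rintro ⟨h1, h2⟩ i hi
        by_cases hiq : i = q
        · subst hiq; simp only [bt]; exact hq.2 h2
        · refine h1 i ?_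
          have : i.1 ≠ k := fun hh => hiq (Fin.ext hh)
          omega

theorem osc {G C : Fin n → Matrix σ σ ℝ} (h : Sys G C)
    (hC : ∀ i j, C i * C j + C j * C i = (if i = j then (-2 : ℝ) else 0) • 1) :
    2 ^ n * ix (fun i => G i + C i) = Fintype.card σ := by
  have hker : ∀ w : EE n σ, TT (fun i => G i + C i) w = 0 → Df (fun i => G i + C i) (ffu w) = 0 := by
    intro w hw
    funext s a
    have := TT_apply (fun i => G i + C i) w s a
    rw [hw] at this
    have h0 : ff a * Df (fun i => G i + C i) (ffu w) s a = 0 := by rw [← this]; rfl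
    exact (mul_eq_zero.1 h0).resolve_left (ff_pos a).ne'
  have hz : ∀ w : EE n σ, TT (fun i => G i + C i) w = 0 → ∀ s a, lev a ≠ 0 → w s a = 0 := by
    intro w hw s a ha
    have := (Df_zero h hC _ (hker w hw) a).1 ha s
    exact (mul_eq_zero.1 this).resolve_left (ff_pos a).ne'
  have h1 : KK (fun i => G i + C i) 1 = ⊥ := by
    rw [eq_bot_iff]
    rintro w ⟨hw, hp⟩
    rw [Submodule.mem_bot]
    refine PiLp.ext fun s => ?_
    ext a
    by_cases ha : lev a = 0
    · exact hp s a (by rw [ha]; norm_num)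
    · exact hz w hw s a ha
  have lev0 : lev (0 : I n) = 0 := by simp [lev]
  let f : KK (fun i => G i + C i) 0 →ₗ[ℝ] WW (fun i => G i + C i) n :=
    { toFun := fun w => ⟨fun s => (w : EE n σ) s 0, fun i _ => by
        have := (Df_zero h hC _ (hker w w.2.1) 0).2 i
        have e : (fun s => ffu (w : EE n σ) s 0) = ff (0 : I n) • fun s => (w : EE n σ) s 0 := rfl
        rw [e, mulVec_smul] at this
        exact (smul_eq_zero.1 this).resolve_left (ff_pos _).ne'⟩
      map_add' := fun u v => rfl
      map_smul' := fun r u => rfl }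
  have hinj : Function.Injective f := by
    rw [← LinearMap.ker_eq_bot, LinearMap.ker_eq_bot']
    intro w hw
    refine Subtype.ext (PiLp.ext fun s => ?_)
    ext a
    by_cases ha : lev a = 0
    · rw [lev_eq_zero a ha]
      exact congrFun (congrArg Subtype.val hw) s
    · exact hz w w.2.1 s a ha
  have hsurj : Function.Surjective f := by
    rintro ⟨v, hv⟩
    let w : EE n σ := WithLp.toLp 2 fun s => lp.single 2 (0 : I n) (v s)
    have hw0 : ∀ s, w s 0 = v s := fun s => by simp [w]
    have hw1 : ∀ s a, a ≠ 0 → w s a = 0 := fun s a ha => by simp [w, lp.single_apply, ha]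
    refine ⟨⟨w, ?_, ?_⟩, Subtype.ext (funext hw0)⟩
    · show TT _ w = 0
      refine PiLp.ext fun s => ?_
      ext a
      rw [TT_apply]
      have e1 : ∀ i t, an i (ffu w t) a = 0 := fun i t => by
        rw [an_apply, ffu, hw1 t (up i a)]
        · simp
        · intro h0; have := congrFun h0 i; simp at this
      have e2 : ∀ i, ∑ t, (G i + C i) t s * cr i (ffu w t) a = 0 := fun i => by
        by_cases h0 : dn i a = 0
        · simp only [cr_apply, ffu, h0, hw0]
          have := congrFun (hv i i.2) s
          simp only [mulVec, dotProduct, transpose_apply, Pi.zero_apply] at this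
          have h2 : ∑ t, (G i + C i) t s * (√(a i) * (ff (0 : I n) * v t)) =
            (√(a i) * ff (0 : I n)) * ∑ t, (G i + C i) t s * v t := by
              rw [Finset.mul_sum]; exact Finset.sum_congr rfl fun t _ => by ring
          rw [h2, this, mul_zero]
        · refine Finset.sum_eq_zero fun t _ => ?_
          rw [cr_apply, ffu, hw1 t _ h0]; simp
      simp only [Df, Finset.sum_sub_distrib, Finset.sum_apply, Pi.sub_apply, Pi.smul_apply, e1, smul_eq_mul, e2]
      simp
    · intro s a ha
      refine hw1 s a ?_
      rintro rfl
      exact ha (by rw [lev0])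
  have h0 : Module.finrank ℝ (KK (fun i => G i + C i) 0) = Module.finrank ℝ (WW (fun i => G i + C i) n) :=
    (LinearEquiv.ofBijective f ⟨hinj, hsurj⟩).finrank_eq
  unfold ix
  rw [h1, finrank_bot, h0]
  have := WW_dim h hC n le_rfl
  rw [← this]; push_cast; ring
end osc
end HR

namespace HR

open scoped Kronecker

section ten
variable {n : ℕ} {σ υ : Type} [Fintype σ] [DecidableEq σ] [Fintype υ] [DecidableEq υ]

noncomputable def sl (y : υ) : EE n (σ × υ) →ₗ[ℝ] EE n σ where
  toFun w := WithLp.toLp 2 fun s => w (s, y)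
  map_add' u v := rfl
  map_smul' r u := rfl

theorem sl_apply (y : υ) (w : EE n (σ × υ)) (s : σ) : sl y w s = w (s, y) := rfl

theorem sl_TT (B : Fin n → Matrix σ σ ℝ) (θ : Matrix υ υ ℝ) (hθ : θᵀ = θ) (y : υ) (w : EE n (σ × υ)) :
    sl y (TT (fun i => B i ⊗ₖ θ) w) = ∑ z, θ y z • TT B (sl z w) := by
  refine PiLp.ext fun s => ?_
  have key : ∀ (M : Matrix σ σ ℝ) (S : H n →L[ℝ] H n), tn (M ⊗ₖ θ) S w (s, y) =
      ∑ z, θ y z • tn M S (sl z w) s := by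
    intro M S
    simp only [tn_apply, kroneckerMap_apply, sl_apply, Fintype.sum_prod_type, Finset.smul_sum, smul_smul]
    rw [Finset.sum_comm]
    simp only [mul_comm]
  rw [sl_apply]
  simp only [TT, ContinuousLinearMap.sum_apply, ContinuousLinearMap.sub_apply, WithLp.ofLp_sum,
    WithLp.ofLp_sub, WithLp.ofLp_smul, Finset.sum_apply, Pi.sub_apply, Pi.smul_apply, Finset.smul_sum, smul_sub]
  rw [Finset.sum_comm]
  refine Finset.sum_congr rfl fun i _ => ?_
  have : (B i ⊗ₖ θ)ᵀ = (B i)ᵀ ⊗ₖ θ := by rw [← kroneckerMap_transpose, hθ]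
  rw [this, key, key, Finset.sum_sub_distrib]

noncomputable def slE (B : Fin n → Matrix σ σ ℝ) (θ : Matrix υ υ ℝ) (hθ : θᵀ = θ) (h1 : θ * θ = 1) (p : ℕ) :
    KK (fun i => B i ⊗ₖ θ) p ≃ₗ[ℝ] (υ → KK B p) where
  toFun w := fun y => ⟨sl y (w : EE n (σ × υ)), by
    refine ⟨?_, fun s a ha => w.2.2 (s, y) a ha⟩
    have hw : TT (fun i => B i ⊗ₖ θ) (w : EE n (σ × υ)) = 0 := w.2.1
    have e : ∀ x, ∑ z, θ x z • TT B (sl z (w : EE n (σ × υ))) = 0 := fun x => by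
      rw [← sl_TT B θ hθ, hw, map_zero]
    have e2 : ∑ x, θ y x • ∑ z, θ x z • TT B (sl z (w : EE n (σ × υ))) = 0 :=
      Finset.sum_eq_zero fun x _ => by rw [e, smul_zero]
    have e3 : ∑ x, θ y x • ∑ z, θ x z • TT B (sl z (w : EE n (σ × υ))) =
        ∑ z, (θ * θ) y z • TT B (sl z (w : EE n (σ × υ))) := by
      simp only [Finset.smul_sum, smul_smul, Matrix.mul_apply, Finset.sum_smul]
      rw [Finset.sum_comm]
    rw [e3, h1] at e2
    rw [Finset.sum_eq_single y] at e2
    · simpa using e2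
    · intro b _ hb; rw [one_apply_ne hb.symm, zero_smul]
    · simp⟩
  map_add' u v := rfl
  map_smul' r u := rfl
  invFun f := ⟨WithLp.toLp 2 fun z => (f z.2 : EE n σ) z.1, by
    refine ⟨?_, fun s a ha => (f s.2).2.2 s.1 a ha⟩
    change TT _ _ = 0
    refine PiLp.ext fun z => ?_
    rw [← sl_apply z.2 _ z.1, sl_TT B θ hθ]
    have : ∀ x, TT B (sl x (WithLp.toLp 2 fun z => (f z.2 : EE n σ) z.1)) = 0 := fun x => (f x).2.1
    simp [this]⟩
  left_inv u := rfl
  right_inv f := rfl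

theorem ix_ten {G C : Fin n → Matrix σ σ ℝ} (h : Sys G C) (θ : Matrix υ υ ℝ) (hθ : θᵀ = θ) (h1 : θ * θ = 1) :
    ix (fun i => (G i + C i) ⊗ₖ θ) = Fintype.card υ * ix (fun i => G i + C i) := by
  have := fd_KK0 h
  have := fd_KK1 h
  unfold ix
  rw [(slE (fun i => G i + C i) θ hθ h1 0).finrank_eq, (slE (fun i => G i + C i) θ hθ h1 1).finrank_eq,
    Module.finrank_pi_fintype, Module.finrank_pi_fintype]
  simp
  ring

end ten

/-- A Clifford family with sign -/
structure Cl {ι σ : Type} [Fintype σ] [DecidableEq σ] (ε : ℝ) (e : ι → Matrix σ σ ℝ) : Prop where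
  tr : ∀ i, (e i)ᵀ = ε • e i
  sq : ∀ i, e i * e i = ε • 1
  ac : ∀ i j, i ≠ j → e i * e j = - (e j * e i)

structure GCl {ι σ : Type} [Fintype σ] [DecidableEq σ] (ε : ℝ) (e : ι → Matrix σ σ ℝ)
    (ω : Matrix σ σ ℝ) : Prop extends Cl ε e where
  otr : ωᵀ = ω
  osq : ω * ω = 1
  oac : ∀ i, e i * ω = - (ω * e i)

section cl
variable {ι κ σ υ : Type} [Fintype σ] [DecidableEq σ] [Fintype υ] [DecidableEq υ]

theorem kmul (a b : Matrix σ σ ℝ) (c d : Matrix υ υ ℝ) : (a ⊗ₖ c) * (b ⊗ₖ d) = (a * b) ⊗ₖ (c * d) :=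
  (mul_kronecker_mul a b c d).symm
theorem ktr (a : Matrix σ σ ℝ) (c : Matrix υ υ ℝ) : (a ⊗ₖ c)ᵀ = aᵀ ⊗ₖ cᵀ := (kroneckerMap_transpose _ _ _).symm
theorem kneg (a : Matrix σ σ ℝ) (c : Matrix υ υ ℝ) : (-a) ⊗ₖ c = - (a ⊗ₖ c) := by
  ext; simp [kroneckerMap_apply]
theorem kneg' (a : Matrix σ σ ℝ) (c : Matrix υ υ ℝ) : a ⊗ₖ (-c) = - (a ⊗ₖ c) := by
  ext; simp [kroneckerMap_apply]
theorem ksm (r : ℝ) (a : Matrix σ σ ℝ) (c : Matrix υ υ ℝ) : (r • a) ⊗ₖ c = r • (a ⊗ₖ c) := by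
  ext; simp [kroneckerMap_apply, mul_assoc]
theorem ksm' (r : ℝ) (a : Matrix σ σ ℝ) (c : Matrix υ υ ℝ) : a ⊗ₖ (r • c) = r • (a ⊗ₖ c) := by
  ext; simp [kroneckerMap_apply, mul_left_comm]
theorem k11 : (1 : Matrix σ σ ℝ) ⊗ₖ (1 : Matrix υ υ ℝ) = 1 := one_kronecker_one

theorem Cl.prod {ε : ℝ} {e : ι → Matrix σ σ ℝ} {f : κ → Matrix υ υ ℝ} {ω : Matrix υ υ ℝ}
    (h : Cl ε e) (k : GCl ε f ω) : Cl ε (Sum.elim (fun i => e i ⊗ₖ ω) (fun j => (1 : Matrix σ σ ℝ) ⊗ₖ f j)) where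
  tr := by
    rintro (i | i)
    · simp [ktr, h.tr, k.otr, ksm]
    · simp [ktr, k.tr, ksm']
  sq := by
    rintro (i | i)
    · simp [kmul, h.sq, k.osq, ksm, k11]
    · simp [kmul, k.sq, ksm', k11]
  ac := by
    rintro (i | i) (j | j) hij
    · have : i ≠ j := fun h => hij (by rw [h])
      simp [kmul, h.ac i j this, kneg]
    · simp [kmul, k.oac, kneg']
    · simp [kmul, k.oac, kneg']
    · have : i ≠ j := fun h => hij (by rw [h])
      simp [kmul, k.ac i j this, kneg']

theorem GCl.prod {ε : ℝ} {e : ι → Matrix σ σ ℝ} {η : Matrix σ σ ℝ} {f : κ → Matrix υ υ ℝ} {ω : Matrix υ υ ℝ}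
    (h : GCl ε e η) (k : GCl ε f ω) :
    GCl ε (Sum.elim (fun i => e i ⊗ₖ ω) (fun j => (1 : Matrix σ σ ℝ) ⊗ₖ f j)) (η ⊗ₖ ω) where
  toCl := h.toCl.prod k
  otr := by rw [ktr, h.otr, k.otr]
  osq := by rw [kmul, h.osq, k.osq, k11]
  oac := by
    rintro (i | i)
    · simp [kmul, h.oac, kneg]
    · simp [kmul, k.oac, kneg']

theorem Cl.comp {ε : ℝ} {e : ι → Matrix σ σ ℝ} (h : Cl ε e) (g : κ → ι) (hg : Function.Injective g) :
    Cl ε (fun k => e (g k)) where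
  tr i := h.tr _
  sq i := h.sq _
  ac i j hij := h.ac _ _ (fun hh => hij (hg hh))
theorem GCl.comp {ε : ℝ} {e : ι → Matrix σ σ ℝ} {ω : Matrix σ σ ℝ} (h : GCl ε e ω) (g : κ → ι)
    (hg : Function.Injective g) : GCl ε (fun k => e (g k)) ω where
  toCl := h.toCl.comp g hg
  otr := h.otr
  osq := h.osq
  oac i := h.oac _

theorem Cl.rel {n : ℕ} {ε : ℝ} {e : Fin n → Matrix σ σ ℝ} (h : Cl ε e) (i j : Fin n) :
    e i * e j + e j * e i = (if i = j then 2 * ε else 0) • 1 := by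
  split_ifs with hh
  · subst hh; rw [h.sq, ← add_smul]; ring_nf
  · rw [h.ac i j hh]; simp
end cl

def mX : Matrix Bool Bool ℝ := fun a b => if a = b then 0 else 1
def mZ : Matrix Bool Bool ℝ := fun a b => if a = b then (if a then 1 else -1) else 0
def mJ : Matrix Bool Bool ℝ := fun a b => if a = b then 0 else (if a then 1 else -1)

theorem m_XX : mX * mX = 1 := by ext a b; cases a <;> cases b <;> simp [mul_apply, mX]
theorem m_ZZ : mZ * mZ = 1 := by ext a b; cases a <;> cases b <;> simp [mul_apply, mZ]
theorem m_JJ : mJ * mJ = -1 := by ext a b; cases a <;> cases b <;> simp [mul_apply, mJ]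
theorem m_ZX : mZ * mX = -(mX * mZ) := by ext a b; cases a <;> cases b <;> simp [mul_apply, mX, mZ]
theorem m_JX : mJ * mX = -(mX * mJ) := by ext a b; cases a <;> cases b <;> simp [mul_apply, mX, mJ]
theorem m_JZ : mJ * mZ = -(mZ * mJ) := by ext a b; cases a <;> cases b <;> simp [mul_apply, mJ, mZ]
theorem m_Xt : mXᵀ = mX := by ext a b; cases a <;> cases b <;> simp [mX]
theorem m_Zt : mZᵀ = mZ := by ext a b; cases a <;> cases b <;> simp [mZ]
theorem m_Jt : mJᵀ = -mJ := by ext a b; cases a <;> cases b <;> simp [mJ]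

theorem gJ : GCl (-1) (fun _ : Unit => mJ) mX where
  tr _ := by simp [m_Jt]
  sq _ := by simp [m_JJ]
  ac i j h := absurd rfl h
  otr := m_Xt
  osq := m_XX
  oac _ := m_JX

theorem exG (n : ℕ) : ∃ (υ : Type) (_ : Fintype υ) (_ : DecidableEq υ) (_ : Nonempty υ) (κ : Fin n → Matrix υ υ ℝ)
    (θ : Matrix υ υ ℝ), GCl (-1) κ θ := by
  induction n with
  | zero => exact ⟨Unit, inferInstance, inferInstance, inferInstance, fun i => i.elim0, 1,
      { tr := fun i => i.elim0, sq := fun i => i.elim0, ac := fun i => i.elim0, otr := by simp, osq := by simp,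
        oac := fun i => i.elim0 }⟩
  | succ n ih =>
    obtain ⟨υ, i1, i2, i3, κ, θ, h⟩ := ih
    have e : Fin (n + 1) ≃ Fin n ⊕ Unit := (finSumFinEquiv.symm.trans (Equiv.sumCongr (Equiv.refl _) (Equiv.ofUnique _ _)))
    exact ⟨υ × Bool, inferInstance, inferInstance, inferInstance, _, _, (h.prod gJ).comp e e.injective⟩

section path
variable {n : ℕ} {σ υ : Type} [Fintype σ] [DecidableEq σ] [Fintype υ] [DecidableEq υ]

theorem pos_eq (C : Fin n → Matrix σ σ ℝ) (x : Fin n → ℝ) (v : σ → ℝ) :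
    ∑ s, (∑ i, ∑ t, C i s t * (x i * v t)) ^ 2 = ((∑ i, x i • C i) *ᵥ v) ⬝ᵥ ((∑ i, x i • C i) *ᵥ v) := by
  simp only [dotProduct]
  refine Finset.sum_congr rfl fun s _ => ?_
  rw [← pow_two]
  congr 1
  simp only [mulVec, dotProduct, Matrix.sum_apply, Matrix.smul_apply, Finset.sum_mul, smul_eq_mul]
  rw [Finset.sum_comm]
  exact Finset.sum_congr rfl fun t _ => Finset.sum_congr rfl fun i _ => by ring

theorem dot_tr (M : Matrix σ σ ℝ) (v : σ → ℝ) : (M *ᵥ v) ⬝ᵥ (M *ᵥ v) = v ⬝ᵥ ((Mᵀ * M) *ᵥ v) := by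
  rw [← mulVec_mulVec, dotProduct_mulVec v, vecMul_transpose]

theorem sum_ac {ε : ℝ} {e : Fin n → Matrix σ σ ℝ} (h : Cl ε e) (x : Fin n → ℝ) :
    (∑ i, x i • e i) * (∑ i, x i • e i) = (ε * ∑ i, x i ^ 2) • 1 := by
  have : (2 : ℝ) • ((∑ i, x i • e i) * (∑ i, x i • e i)) = (2 : ℝ) • ((ε * ∑ i, x i ^ 2) • (1 : Matrix σ σ ℝ)) := by
    rw [two_smul, Finset.sum_mul_sum]
    nth_rewrite 2 [Finset.sum_comm]
    rw [← Finset.sum_add_distrib]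
    have e1 : ∀ i, (∑ j, x i • e i * x j • e j) + ∑ j, x j • e j * x i • e i = (2 * ε * x i ^ 2) • (1 : Matrix σ σ ℝ) := by
      intro i
      rw [← Finset.sum_add_distrib, Finset.sum_eq_single i]
      · simp only [smul_mul_smul_comm, h.sq, smul_smul, ← add_smul]; ring_nf
      · intro j _ hj
        rw [smul_mul_smul_comm, smul_mul_smul_comm, h.ac i j hj.symm, mul_comm (x j), smul_neg, neg_add_cancel]
      · simp
    simp only [e1]
    rw [← Finset.sum_smul, smul_smul, ← Finset.mul_sum, mul_assoc]
  exact smul_right_injective _ two_ne_zero this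

theorem sys_path {G C : Fin n → Matrix σ σ ℝ} (h : Sys G C) {κ : Fin n → Matrix υ υ ℝ} {θ : Matrix υ υ ℝ}
    (k : GCl (-1) κ θ) (x : ℝ) :
    Sys (fun i => G i ⊗ₖ θ) (fun i => (1 - x) • (C i ⊗ₖ θ) + x • ((1 : Matrix σ σ ℝ) ⊗ₖ κ i)) where
  Gs i := by rw [ktr, h.Gs, k.otr]
  Gr i j := by
    rw [kmul, kmul, k.osq]
    have : (G i * G j) ⊗ₖ (1 : Matrix υ υ ℝ) + (G j * G i) ⊗ₖ (1 : Matrix υ υ ℝ) =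
      (G i * G j + G j * G i) ⊗ₖ (1 : Matrix υ υ ℝ) := (add_kronecker _ _ _).symm
    rw [this, h.Gr, ksm, k11]
  Cs i := by
    simp [ktr, h.Cs, k.otr, k.tr, kneg, kneg']
    abel
  GC i j := by
    simp [mul_add, add_mul, kmul, h.GC, k.osq, kneg, kneg', k.oac]
    abel
  pos := by
    obtain ⟨c, hc, hp⟩ := h.pos
    refine ⟨(1 - x) ^ 2 * c + x ^ 2, ?_, ?_⟩
    · rcases eq_or_ne x 0 with rfl | hx
      · simpa using hc
      · positivity
    · intro y w
      rw [pos_eq, dot_tr]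
      set M := ∑ i, y i • C i with hM
      set Q := ∑ i, y i • κ i with hQ
      have e1 : ∑ i, y i • ((1 - x) • (C i ⊗ₖ θ) + x • ((1 : Matrix σ σ ℝ) ⊗ₖ κ i)) =
          (1 - x) • (M ⊗ₖ θ) + x • ((1 : Matrix σ σ ℝ) ⊗ₖ Q) := by
        ext ⟨a, b⟩ ⟨a', b'⟩
        simp only [hM, hQ, Matrix.sum_apply, Matrix.add_apply, Matrix.smul_apply, kroneckerMap_apply, smul_eq_mul,
          Finset.sum_mul, Finset.mul_sum, ← Finset.sum_add_distrib]
        exact Finset.sum_congr rfl fun i _ => by ring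
      have hMt : Mᵀ = - M := by
        rw [hM, transpose_sum, ← Finset.sum_neg_distrib]
        exact Finset.sum_congr rfl fun i _ => by rw [transpose_smul, h.Cs, smul_neg]
      have hQt : Qᵀ = - Q := by
        rw [hQ, transpose_sum, ← Finset.sum_neg_distrib]
        exact Finset.sum_congr rfl fun i _ => by rw [transpose_smul, k.tr]; simp
      have hQo : Q * θ = - (θ * Q) := by
        rw [hQ, Finset.sum_mul, Finset.mul_sum, ← Finset.sum_neg_distrib]
        exact Finset.sum_congr rfl fun i _ => by rw [smul_mul_assoc, k.oac, mul_smul_comm, smul_neg]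
      have hQQ : Q * Q = (-1 * ∑ i, y i ^ 2) • 1 := sum_ac k.toCl y
      have e2 : ((1 - x) • (M ⊗ₖ θ) + x • ((1 : Matrix σ σ ℝ) ⊗ₖ Q))ᵀ * ((1 - x) • (M ⊗ₖ θ) + x • ((1 : Matrix σ σ ℝ) ⊗ₖ Q))
          = ((1 - x) ^ 2) • ((M ⊗ₖ (1 : Matrix υ υ ℝ))ᵀ * (M ⊗ₖ (1 : Matrix υ υ ℝ))) + (x ^ 2 * ∑ i, y i ^ 2) • 1 := by
        simp only [transpose_add, transpose_smul, ktr, hMt, hQt, k.otr, add_mul, mul_add, smul_mul_smul_comm, kmul,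
          k.osq, transpose_one, one_mul, mul_one, kneg, kneg', neg_mul, mul_neg, hQo, hQQ, ksm', k11]
        module
      rw [e1, e2, add_mulVec, smul_mulVec, smul_mulVec, one_mulVec, dotProduct_add, dotProduct_smul,
        dotProduct_smul, ← dot_tr]
      have e3 : c * (∑ i, y i ^ 2) * (∑ s, w s ^ 2) ≤
          ((M ⊗ₖ (1 : Matrix υ υ ℝ)) *ᵥ w) ⬝ᵥ ((M ⊗ₖ (1 : Matrix υ υ ℝ)) *ᵥ w) := by
        have e4 : ∀ s b, ((M ⊗ₖ (1 : Matrix υ υ ℝ)) *ᵥ w) (s, b) = (M *ᵥ fun t => w (t, b)) s := by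
          intro s b
          simp only [mulVec, dotProduct, Fintype.sum_prod_type, kroneckerMap_apply]
          refine Finset.sum_congr rfl fun t _ => ?_
          rw [Finset.sum_eq_single b]
          · simp
          · intro b' _ hb; rw [one_apply_ne hb.symm]; simp
          · simp
        have e5 := fun b => hp y (fun t => w (t, b))
        simp only [pos_eq] at e5
        have e6 := Finset.sum_le_sum (s := Finset.univ) fun b _ => e5 b
        rw [← Finset.mul_sum] at e6
        simp only [dotProduct, Fintype.sum_prod_type, e4]
        rw [Finset.sum_comm, Finset.sum_comm (f := fun x y_1 => (M *ᵥ fun t => w (t, y_1)) x * (M *ᵥ fun t => w (t, y_1)) x)]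
        exact e6
      have e7 : w ⬝ᵥ w = ∑ s, w s ^ 2 := Finset.sum_congr rfl fun s _ => by ring
      rw [e7, smul_eq_mul, smul_eq_mul]
      have e8 := mul_le_mul_of_nonneg_left e3 (sq_nonneg (1 - x))
      linarith

theorem IDX {G C : Fin n → Matrix σ σ ℝ} (h : Sys G C) :
    2 ^ n * ix (fun i => G i + C i) = Fintype.card σ := by
  obtain ⟨υ, i1, i2, i3, κ, θ, k⟩ := exG n
  have h1 := ix_path (G := fun i => G i ⊗ₖ θ) (C₀ := fun i => C i ⊗ₖ θ) (C₁ := fun i => (1 : Matrix σ σ ℝ) ⊗ₖ κ i)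
    (sys_path h k)
  have h2 := ix_ten h θ k.otr k.osq
  have h3 : (fun i => (G i + C i) ⊗ₖ θ) = fun i => G i ⊗ₖ θ + C i ⊗ₖ θ := funext fun i => add_kronecker _ _ _
  rw [h3] at h2
  have h4 := sys_path h k 1
  simp only [sub_self, zero_smul, one_smul, zero_add] at h4
  have h5 := osc h4 (fun i j => by
    have := k.toCl.rel i j
    rw [kmul, kmul, one_mul, ← kronecker_add, this, ksm', k11]; norm_num)
  rw [← h1, h2, Fintype.card_prod] at h5
  have h6 : (0 : ℤ) < Fintype.card υ := by exact_mod_cast Fintype.card_pos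
  have : (Fintype.card υ : ℤ) * (2 ^ n * ix (fun i => G i + C i)) = Fintype.card υ * Fintype.card σ := by
    push_cast at h5; linarith
  exact mul_left_cancel₀ h6.ne' this
end path
end HR

namespace HR

open scoped Kronecker

theorem two_dvd {V : Type*} [AddCommGroup V] [Module ℝ V] (J : Module.End ℝ V)
    (hJ : J * J = -1) : 2 ∣ Module.finrank ℝ V := by
  let φ : ℂ →ₐ[ℝ] Module.End ℝ V := Complex.lift ⟨J, hJ⟩
  letI : Module ℂ V := Module.compHom V φ.toRingHom
  have hs : ∀ (c : ℂ) (v : V), c • v = φ c v := fun c v => rfl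
  haveI : IsScalarTower ℝ ℂ V := ⟨fun r c v => by rw [hs, hs, map_smul]; rfl⟩
  have := Module.finrank_mul_finrank ℝ ℂ V
  rw [Complex.finrank_real_complex] at this
  exact ⟨_, this.symm⟩

theorem four_dvd {V : Type*} [AddCommGroup V] [Module ℝ V] (J K : Module.End ℝ V)
    (hJ : J * J = -1) (hK : K * K = -1) (hJK : J * K = - (K * J)) : 4 ∣ Module.finrank ℝ V := by
  let q : QuaternionAlgebra.Basis (Module.End ℝ V) (-1 : ℝ) 0 (-1) :=
    { i := J, j := K, k := J * K
      i_mul_i := by rw [hJ]; simp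
      j_mul_j := by rw [hK]; simp
      i_mul_j := rfl
      j_mul_i := by rw [hJK]; simp }
  let φ : Quaternion ℝ →ₐ[ℝ] Module.End ℝ V := q.liftHom
  letI : Module (Quaternion ℝ) V := Module.compHom V φ.toRingHom
  have hs : ∀ (c : Quaternion ℝ) (v : V), c • v = φ c v := fun c v => rfl
  haveI : IsScalarTower ℝ (Quaternion ℝ) V := ⟨fun r c v => by rw [hs, hs, map_smul]; rfl⟩
  have := Module.finrank_mul_finrank ℝ (Quaternion ℝ) V
  rw [Quaternion.finrank_eq_four] at this
  exact ⟨_, this.symm⟩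

section act
variable {n : ℕ} {σ υ : Type} [Fintype σ] [DecidableEq σ]


theorem TT_act (B : Fin n → Matrix σ σ ℝ) (J : Matrix σ σ ℝ) (ε : ℝ) 
    (h1 : ∀ i, J * B i = ε • (B i * J)) (h2 : ∀ i, J * (B i)ᵀ = ε • ((B i)ᵀ * J)) (w : EE n σ) :
    tn J (ContinuousLinearMap.id ℝ _) (TT B w) = ε • TT B (tn J (ContinuousLinearMap.id ℝ _) w) := by
  simp only [TT, ContinuousLinearMap.sum_apply, ContinuousLinearMap.sub_apply, map_sum, map_sub, Finset.smul_sum,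
    smul_sub, tn_mul, h1, h2, tn_smul, ContinuousLinearMap.comp_id, ContinuousLinearMap.id_comp,
    ContinuousLinearMap.smul_apply]

noncomputable def actK (B : Fin n → Matrix σ σ ℝ) (J : Matrix σ σ ℝ) (ε : ℝ) (hε : ε ≠ 0)
    (h1 : ∀ i, J * B i = ε • (B i * J)) (h2 : ∀ i, J * (B i)ᵀ = ε • ((B i)ᵀ * J)) (p : ℕ) :
    Module.End ℝ (KK B p) :=
  (tn J (ContinuousLinearMap.id ℝ _) : EE n σ →L[ℝ] EE n σ).toLinearMap.restrict (by
    rintro w ⟨hw, hp⟩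
    refine ⟨?_, fun s a ha => ?_⟩
    · have := TT_act B J ε h1 h2 w
      have hw' : TT B w = 0 := hw
      rw [hw', map_zero] at this
      exact (smul_eq_zero.1 this.symm).resolve_left hε
    · change (tn J (ContinuousLinearMap.id ℝ _) w s) a = 0
      have e : ∀ t, (w t) a = 0 := fun t => hp t a ha
      simp only [tn_apply, ContinuousLinearMap.id_apply, lp.coeFn_sum, lp.coeFn_smul, Finset.sum_apply,
        Pi.smul_apply, smul_eq_mul]
      exact Finset.sum_eq_zero fun t _ => by
        rw [e, mul_zero])

theorem actK_coe (B : Fin n → Matrix σ σ ℝ) (J : Matrix σ σ ℝ) (ε : ℝ) (hε : ε ≠ 0)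
    (h1 : ∀ i, J * B i = ε • (B i * J)) (h2 : ∀ i, J * (B i)ᵀ = ε • ((B i)ᵀ * J)) (p : ℕ) (w : KK B p) :
    (actK B J ε hε h1 h2 p w : EE n σ) = tn J (ContinuousLinearMap.id ℝ _) (w : EE n σ) := rfl

theorem tn_one' (w : EE n σ) : tn (1 : Matrix σ σ ℝ) (ContinuousLinearMap.id ℝ (H n)) w = w := by
  refine PiLp.ext fun s => ?_
  rw [tn_apply, Finset.sum_eq_single s]
  · simp
  · intro t _ ht; rw [one_apply_ne ht.symm, zero_smul]
  · simp

theorem act_dvd {r : ℕ} (hr : r ≤ 2) (B : Fin n → Matrix σ σ ℝ) (J : Fin r → Matrix σ σ ℝ)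
    (hsq : ∀ k, J k * J k = -1) (hac : ∀ k l, k ≠ l → J k * J l = - (J l * J k))
    (h : ∀ k, ∃ ε : ℝ, ε ≠ 0 ∧ (∀ i, J k * B i = ε • (B i * J k)) ∧ (∀ i, J k * (B i)ᵀ = ε • ((B i)ᵀ * J k)))
    (p : ℕ) : 2 ^ r ∣ Module.finrank ℝ (KK B p) := by
  choose ε hε h1 h2 using h
  let A := fun k => actK B (J k) (ε k) (hε k) (h1 k) (h2 k) p
  have hA : ∀ k, A k * A k = -1 := by
    intro k
    refine LinearMap.ext fun w => Subtype.ext ?_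
    change tn (J k) (ContinuousLinearMap.id ℝ _) (tn (J k) (ContinuousLinearMap.id ℝ _) (w : EE n σ)) = - (w : EE n σ)
    rw [tn_mul, hsq, tn_neg, ContinuousLinearMap.comp_id]
    exact congrArg Neg.neg (tn_one' (w : EE n σ))
  have hA2 : ∀ k l, k ≠ l → A k * A l = - (A l * A k) := by
    intro k l hkl
    refine LinearMap.ext fun w => Subtype.ext ?_
    change tn (J k) (ContinuousLinearMap.id ℝ _) (tn (J l) (ContinuousLinearMap.id ℝ _) (w : EE n σ)) =
      - tn (J l) (ContinuousLinearMap.id ℝ _) (tn (J k) (ContinuousLinearMap.id ℝ _) (w : EE n σ))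
    rw [tn_mul, tn_mul, hac k l hkl, tn_neg]
    rfl
  interval_cases r
  · simp
  · exact two_dvd (A 0) (hA 0)
  · exact four_dvd (A 0) (A 1) (hA 0) (hA 1) (hA2 0 1 (by decide))

end act

/-- spinor modules with extra structure -/
def Spn (n r d : ℕ) : Prop := ∃ (S : Type) (_ : Fintype S) (_ : DecidableEq S) (γ : Fin (n + 1) → Matrix S S ℝ)
  (J : Fin r → Matrix S S ℝ), Fintype.card S = d ∧ Cl 1 γ ∧ (∀ k, J k * J k = -1) ∧
    (∀ k l, k ≠ l → J k * J l = - (J l * J k)) ∧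
    ∀ k, (∀ i, J k * γ i = γ i * J k) ∨ (∀ i, J k * γ i = - (γ i * J k))

section quat
def qL : Fin 3 → Matrix (Bool × Bool) (Bool × Bool) ℝ := ![mJ ⊗ₖ 1, mX ⊗ₖ mJ, mZ ⊗ₖ mJ]
def qR : Fin 3 → Matrix (Bool × Bool) (Bool × Bool) ℝ := ![1 ⊗ₖ mJ, mJ ⊗ₖ mX, mJ ⊗ₖ mZ]

theorem cL : Cl (-1) qL where
  tr i := by fin_cases i <;> simp [qL, ktr, m_Jt, m_Xt, m_Zt, kneg, kneg']
  sq i := by fin_cases i <;> simp [qL, kmul, m_JJ, m_XX, m_ZZ, kneg, kneg', k11]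
  ac i j h := by fin_cases i <;> fin_cases j <;> simp [qL, kmul, m_JX, m_JZ, m_ZX, kneg] at h ⊢
theorem cR : Cl (-1) qR where
  tr i := by fin_cases i <;> simp [qR, ktr, m_Jt, m_Xt, m_Zt, kneg, kneg']
  sq i := by fin_cases i <;> simp [qR, kmul, m_JJ, m_XX, m_ZZ, kneg, kneg', k11]
  ac i j h := by fin_cases i <;> fin_cases j <;> simp [qR, kmul, m_JX, m_JZ, m_ZX, kneg'] at h ⊢
theorem LR (i j : Fin 3) : qL i * qR j = qR j * qL i := by
  fin_cases i <;> fin_cases j <;> simp [qL, qR, kmul, m_JX, m_JZ, m_ZX, kneg, kneg']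

def oE : Fin 3 ⊕ Fin 3 ⊕ Unit → Matrix (Bool × Bool × Bool) (Bool × Bool × Bool) ℝ :=
  Sum.elim (fun i => mX ⊗ₖ qR i) (Sum.elim (fun i => mZ ⊗ₖ qL i) (fun _ => mJ ⊗ₖ 1))
theorem cE : Cl (-1) oE where
  tr := by rintro (i | i | i) <;> simp [oE, ktr, cL.tr, cR.tr, m_Jt, m_Xt, m_Zt, kneg, kneg']
  sq := by rintro (i | i | i) <;> simp [oE, kmul, cL.sq, cR.sq, m_JJ, m_XX, m_ZZ, kneg, kneg', k11]
  ac := by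
    rintro (i | i | i) (j | j | j) h
    · have : i ≠ j := fun hh => h (by rw [hh])
      simp [oE, kmul, cR.ac i j this, kneg']
    · simp [oE, kmul, LR, m_ZX, kneg]
    · simp [oE, kmul, m_JX, kneg]
    · simp [oE, kmul, LR, m_ZX, kneg]
    · have : i ≠ j := fun hh => h (by rw [hh])
      simp [oE, kmul, cL.ac i j this, kneg']
    · simp [oE, kmul, m_JZ, kneg]
    · simp [oE, kmul, m_JX, kneg]
    · simp [oE, kmul, m_JZ, kneg]
    · exact absurd rfl h

abbrev O16 := Bool × Bool × Bool × Bool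
def oF : (Fin 3 ⊕ Fin 3 ⊕ Unit) ⊕ Unit → Matrix O16 O16 ℝ :=
  Sum.elim (fun i => mX ⊗ₖ oE i) (fun _ => mJ ⊗ₖ 1)
def oW : Matrix O16 O16 ℝ := mZ ⊗ₖ 1
theorem cF : GCl (-1) oF oW where
  tr := by rintro (i | i) <;> simp [oF, ktr, cE.tr, m_Jt, m_Xt, kneg, kneg']
  sq := by rintro (i | i) <;> simp [oF, kmul, cE.sq, m_JJ, m_XX, kneg, kneg', k11]
  ac := by
    rintro (i | i) (j | j) h
    · have : i ≠ j := fun hh => h (by rw [hh])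
      simp [oF, kmul, cE.ac i j this, kneg']
    · simp [oF, kmul, m_JX, kneg]
    · simp [oF, kmul, m_JX, kneg]
    · exact absurd rfl h
  otr := by simp [oW, ktr, m_Zt]
  osq := by simp [oW, kmul, m_ZZ, k11]
  oac := by rintro (i | i) <;> simp [oF, oW, kmul, m_ZX, m_JZ, kneg]

theorem cG : GCl 1 (fun i => oW * oF i) oW where
  tr i := by rw [transpose_mul, cF.otr, cF.tr]; simp [cF.oac]
  sq i := by
    calc oW * oF i * (oW * oF i) = oW * (oF i * oW) * oF i := by noncomm_ring
      _ = - ((oW * oW) * (oF i * oF i)) := by rw [cF.oac]; noncomm_ring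
      _ = _ := by rw [cF.osq, cF.sq]; simp
  ac i j h := by
    calc oW * oF i * (oW * oF j) = oW * (oF i * oW) * oF j := by noncomm_ring
      _ = - ((oW * oW) * (oF i * oF j)) := by rw [cF.oac]; noncomm_ring
      _ = ((oW * oW) * (oF j * oF i)) := by rw [cF.ac i j h]; noncomm_ring
      _ = - (oW * (- (oW * oF j)) * oF i) := by noncomm_ring
      _ = _ := by rw [← cF.oac]; noncomm_ring
  otr := cF.otr
  osq := cF.osq
  oac i := by rw [mul_assoc, cF.oac]; noncomm_ring
end quat

theorem Spn.step {n r d : ℕ} (h : Spn n r d) : Spn (n + 8) r (d * 16) := by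
  obtain ⟨S, i1, i2, γ, J, hd, hγ, hsq, hac, hc⟩ := h
  classical
  let e : Fin (n + 8 + 1) ≃ Fin (n + 1) ⊕ ((Fin 3 ⊕ Fin 3 ⊕ Unit) ⊕ Unit) := Fintype.equivOfCardEq (by simp)
  let K : Fin r → Matrix (S × O16) (S × O16) ℝ := fun k =>
    if (∀ i, J k * γ i = γ i * J k) then J k ⊗ₖ 1 else J k ⊗ₖ oW
  refine ⟨S × O16, inferInstance, inferInstance, _, K, ?_, (hγ.prod cG).comp e e.injective, ?_, ?_, ?_⟩
  · simp [hd]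
  · intro k
    simp only [K]
    split_ifs <;> simp [kmul, hsq, cF.osq, kneg, k11]
  · intro k l hkl
    simp only [K]
    split_ifs <;> simp [kmul, hac k l hkl, kneg]
  · intro k
    by_cases hk : ∀ i, J k * γ i = γ i * J k
    · left
      intro i
      simp only [K, if_pos hk]
      rcases e i with j | j <;> simp [kmul, hk]
    · right
      have hk' := (hc k).resolve_left hk
      intro i
      simp only [K, if_neg hk]
      rcases e i with j | j
      · simp [kmul, hk', kneg]
      · simp only [Sum.elim_inr, kmul, cG.oac, mul_one, one_mul, kneg', neg_neg]

theorem Spn.steps {n r d : ℕ} (h : Spn n r d) (a : ℕ) : Spn (n + 8 * a) r (d * 16 ^ a) := by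
  induction a with
  | zero => simpa using h
  | succ a ih => 
    have := ih.step
    rwa [mul_assoc, ← pow_succ] at this

theorem spn1 : Spn 1 1 2 := by
  refine ⟨Bool, inferInstance, inferInstance, ![mX, mZ], ![mJ], by simp, ⟨?_, ?_, ?_⟩, ?_, ?_, ?_⟩
  · intro i; fin_cases i <;> simp [m_Xt, m_Zt]
  · intro i; fin_cases i <;> simp [m_XX, m_ZZ]
  · intro i j h; fin_cases i <;> fin_cases j <;> simp [m_ZX] at h ⊢
  · intro k; fin_cases k; simp [m_JJ]
  · intro k l h; exact absurd (Subsingleton.elim k l) h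
  · intro k; right; intro i; fin_cases k; fin_cases i <;> simp [m_JX, m_JZ]

theorem spn2 : Spn 2 2 4 := by
  have c01 := cR.ac 0 1 (by decide)
  have s := cR.sq
  refine ⟨Bool × Bool, inferInstance, inferInstance, fun i => qL i * qR 0, ![qR 0, qR 1], by simp, ⟨?_, ?_, ?_⟩, ?_, ?_, ?_⟩
  · intro i
    rw [transpose_mul, cL.tr, cR.tr]; simp [LR]
  · intro i
    calc qL i * qR 0 * (qL i * qR 0) = qL i * (qR 0 * qL i) * qR 0 := by noncomm_ring
      _ = (qL i * qL i) * (qR 0 * qR 0) := by rw [← LR]; noncomm_ring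
      _ = _ := by rw [cL.sq, cR.sq]; simp
  · intro i j h
    calc qL i * qR 0 * (qL j * qR 0) = qL i * (qR 0 * qL j) * qR 0 := by noncomm_ring
      _ = (qL i * qL j) * (qR 0 * qR 0) := by rw [← LR]; noncomm_ring
      _ = - (qL j * (qL i * qR 0) * qR 0) := by rw [cL.ac i j h]; noncomm_ring
      _ = - (qL j * (qR 0 * qL i) * qR 0) := by rw [LR i]
      _ = _ := by noncomm_ring
  · intro k; fin_cases k <;> simp [s]
  · intro k l h; fin_cases k <;> fin_cases l <;> simp [c01] at h ⊢
  · intro k; fin_cases k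
    · left; intro i; simp only [Fin.zero_eta, cons_val_zero]; rw [← mul_assoc, ← LR]
    · right; intro i
      simp only [Fin.mk_one, cons_val_one, cons_val_zero]
      rw [← mul_assoc, ← LR, mul_assoc, mul_assoc, c01]; simp

theorem spn4 : Spn 4 2 8 := by
  let g : Fin 3 ⊕ Bool → Matrix (Bool × Bool × Bool) (Bool × Bool × Bool) ℝ :=
    Sum.elim (fun i => mJ ⊗ₖ qL i) (fun b => if b then mX ⊗ₖ 1 else mZ ⊗ₖ 1)
  have hg : Cl 1 g := by
    refine ⟨?_, ?_, ?_⟩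
    · rintro (i | i | i) <;> simp [g, ktr, m_Jt, m_Xt, m_Zt, cL.tr, kneg, kneg']
    · rintro (i | i | i) <;> simp [g, kmul, m_JJ, m_XX, m_ZZ, cL.sq, kneg, kneg', k11]
    · rintro (i | i | i) (j | j | j) h
      · have : i ≠ j := fun hh => h (by rw [hh])
        simp [g, kmul, cL.ac i j this, kneg']
      all_goals first | exact absurd rfl h | simp [g, kmul, m_JX, m_JZ, m_ZX, kneg]
  let e : Fin 5 ≃ Fin 3 ⊕ Bool := Fintype.equivOfCardEq (by simp)
  have c01 := cR.ac 0 1 (by decide)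
  have s := cR.sq
  refine ⟨Bool × Bool × Bool, inferInstance, inferInstance, _, fun k => 1 ⊗ₖ (![qR 0, qR 1] k), by simp, hg.comp e e.injective, ?_, ?_, ?_⟩
  · intro k; fin_cases k <;> simp [kmul, s, kneg', k11]
  · intro k l h; fin_cases k <;> fin_cases l <;> simp [c01, kmul, kneg'] at h ⊢
  · intro k; left; intro i
    rcases e i with j | j | j <;> fin_cases k <;> simp [g, kmul, LR]

theorem spn8 : Spn 8 0 16 := by
  let g : Unit ⊕ ((Fin 3 ⊕ Fin 3 ⊕ Unit) ⊕ Unit) → Matrix O16 O16 ℝ :=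
    Sum.elim (fun _ => oW) (fun i => oW * oF i)
  have hg : Cl 1 g := by
    refine ⟨?_, ?_, ?_⟩
    · rintro (i | i)
      · simp [g, cG.otr]
      · exact cG.tr i
    · rintro (i | i)
      · simp [g, cG.osq]
      · exact cG.sq i
    · rintro (i | i) (j | j) h
      · exact absurd rfl h
      · simp only [g, Sum.elim_inl, Sum.elim_inr]; rw [cG.oac, neg_neg]
      · simp only [g, Sum.elim_inl, Sum.elim_inr]; rw [cG.oac]
      · exact cG.ac i j fun hh => h (by rw [hh])
  let e : Fin 9 ≃ Unit ⊕ ((Fin 3 ⊕ Fin 3 ⊕ Unit) ⊕ Unit) := Fintype.equivOfCardEq (by simp)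
  exact ⟨O16, inferInstance, inferInstance, _, fun k => k.elim0, by simp, hg.comp e e.injective,
    fun k => k.elim0, fun k => k.elim0, fun k => k.elim0⟩

end HR

namespace HR

open scoped Kronecker

theorem posl {n : ℕ} {σ : Type} [Fintype σ] [DecidableEq σ] (C : Fin n → Matrix σ σ ℝ)
    (h : ∀ x : Fin n → ℝ, x ≠ 0 → ∃ M', M' * (∑ i, x i • C i) = 1) :
    ∃ c : ℝ, 0 < c ∧ ∀ (x : Fin n → ℝ) (v : σ → ℝ),
      c * (∑ i, x i ^ 2) * (∑ s, v s ^ 2) ≤ ∑ s, (∑ i, ∑ t, C i s t * (x i * v t)) ^ 2 := by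
  let f : EuclideanSpace ℝ (Fin n) × EuclideanSpace ℝ σ → ℝ := fun p =>
    ∑ s, (∑ i, ∑ t, C i s t * (p.1 i * p.2 t)) ^ 2
  have hf : Continuous f := by fun_prop
  let K : Set (EuclideanSpace ℝ (Fin n) × EuclideanSpace ℝ σ) := Metric.sphere 0 1 ×ˢ Metric.sphere 0 1
  have hK : IsCompact K := (isCompact_sphere _ _).prod (isCompact_sphere _ _)
  have hpos : ∀ p ∈ K, 0 < f p := by
    rintro ⟨x, v⟩ ⟨hx, hv⟩
    have hx0 : x ≠ 0 := by rintro rfl; simp at hx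
    have hv0 : v ≠ 0 := by rintro rfl; simp at hv
    have e : f (x, v) = _ := pos_eq C x.ofLp v.ofLp
    rw [e]
    have hx1 : x.ofLp ≠ 0 := fun h0 => hx0 (by ext i; exact congrFun h0 i)
    obtain ⟨M', hM⟩ := h _ hx1
    refine lt_of_le_of_ne (Finset.sum_nonneg fun s _ => mul_self_nonneg _) (Ne.symm fun h0 => hv0 ?_)
    have h1 := dotProduct_self_eq_zero.1 h0
    have h2 : M' *ᵥ ((∑ i, x.ofLp i • C i) *ᵥ v.ofLp) = 0 := by rw [h1, mulVec_zero]
    rw [mulVec_mulVec, hM, one_mulVec] at h2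
    ext i; exact congrFun h2 i
  have hc : ∃ c : ℝ, 0 < c ∧ ∀ p ∈ K, c ≤ f p := by
    rcases K.eq_empty_or_nonempty with h0 | h0
    · exact ⟨1, one_pos, by simp [h0]⟩
    · obtain ⟨p, hp, hm⟩ := hK.exists_isMinOn h0 hf.continuousOn
      exact ⟨f p, hpos p hp, fun q hq => hm hq⟩
  obtain ⟨c, hc, hcf⟩ := hc
  refine ⟨c, hc, fun x v => ?_⟩
  let x' : EuclideanSpace ℝ (Fin n) := WithLp.toLp 2 x
  let v' : EuclideanSpace ℝ σ := WithLp.toLp 2 v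
  have nx : ∑ i, x i ^ 2 = ‖x'‖ ^ 2 := by rw [EuclideanSpace.real_norm_sq_eq]
  have nv : ∑ i, v i ^ 2 = ‖v'‖ ^ 2 := by rw [EuclideanSpace.real_norm_sq_eq]
  rw [nx, nv]
  have e : ∑ s, (∑ i, ∑ t, C i s t * (x i * v t)) ^ 2 = f (x', v') := rfl
  rw [e]
  have fnn : 0 ≤ f (x', v') := Finset.sum_nonneg fun s _ => sq_nonneg _
  by_cases hx : x' = 0
  · rw [hx] at fnn ⊢; simpa using fnn
  by_cases hv : v' = 0
  · rw [hv] at fnn ⊢; simpa using fnn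
  have h1 := hcf (‖x'‖⁻¹ • x', ‖v'‖⁻¹ • v') ⟨by simp [norm_smul, hx], by simp [norm_smul, hv]⟩
  have h2 : f (‖x'‖⁻¹ • x', ‖v'‖⁻¹ • v') = (‖x'‖⁻¹ * ‖v'‖⁻¹) ^ 2 * f (x', v') := by
    simp only [f, Finset.mul_sum]
    refine Finset.sum_congr rfl fun s _ => ?_
    rw [← mul_pow, Finset.mul_sum]
    congr 1
    refine Finset.sum_congr rfl fun i _ => ?_
    rw [Finset.mul_sum]
    refine Finset.sum_congr rfl fun t _ => ?_
    simp only [PiLp.smul_apply, smul_eq_mul]; ring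
  rw [h2] at h1
  have px : 0 < ‖x'‖ := norm_pos_iff.2 hx
  have pv : 0 < ‖v'‖ := norm_pos_iff.2 hv
  have h3 := mul_le_mul_of_nonneg_left h1 (sq_nonneg (‖x'‖ * ‖v'‖))
  have h4 : (‖x'‖ * ‖v'‖) ^ 2 * ((‖x'‖⁻¹ * ‖v'‖⁻¹) ^ 2 * f (x', v')) = f (x', v') := by
    field_simp
  rw [h4] at h3
  linarith [h3]

theorem main_dvd {n r d N : ℕ} (hr : r ≤ 2) (h : Spn n r d) (A : Fin n → Matrix (Fin N) (Fin N) ℝ)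
    (hA : ∀ i, (A i)ᵀ = - A i) (hu : ∀ x : Fin n → ℝ, x ≠ 0 → IsUnit (∑ i, x i • A i)) :
    2 ^ n * 2 ^ r ∣ d * N := by
  obtain ⟨S, i1, i2, γ, J, hd, hγ, hsq, hac, hc⟩ := h
  have gs : ∀ i, (γ i)ᵀ = γ i := fun i => by rw [hγ.tr, one_smul]
  have gq : ∀ i, γ i * γ i = 1 := fun i => by rw [hγ.sq, one_smul]
  let G : Fin n → Matrix (S × Fin N) (S × Fin N) ℝ := fun i => γ i.castSucc ⊗ₖ 1
  let C : Fin n → Matrix (S × Fin N) (S × Fin N) ℝ := fun i => γ (Fin.last n) ⊗ₖ A i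
  have hS : Sys G C := by
    refine ⟨?_, ?_, ?_, ?_, ?_⟩
    · intro i; simp [G, ktr, gs]
    · intro i j
      have := (hγ.comp Fin.castSucc (Fin.castSucc_injective n)).rel i j
      simp only [G, kmul, one_mul]
      rw [← add_kronecker, this, ksm, k11, mul_one]
    · intro i; simp [C, ktr, gs, hA, kneg']
    · intro i j
      have := hγ.ac i.castSucc (Fin.last n) (Fin.castSucc_lt_last i).ne
      simp [G, C, kmul, this, kneg]
    · apply posl
      intro x hx
      obtain ⟨M', -, hM⟩ := isUnit_iff_exists.1 (hu x hx)
      refine ⟨γ (Fin.last n) ⊗ₖ M', ?_⟩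
      have : ∑ i, x i • C i = γ (Fin.last n) ⊗ₖ (∑ i, x i • A i) := by
        ext ⟨a, b⟩ ⟨a', b'⟩
        simp only [C, Matrix.sum_apply, Matrix.smul_apply, kroneckerMap_apply, smul_eq_mul, Finset.mul_sum]
        exact Finset.sum_congr rfl fun i _ => by ring
      rw [this, kmul, gq, hM, k11]
  have h1 := IDX hS
  have h2 : ∀ p, 2 ^ r ∣ Module.finrank ℝ (KK (fun i => G i + C i) p) := by
    intro p
    refine act_dvd hr (fun i => G i + C i) (fun k => J k ⊗ₖ (1 : Matrix (Fin N) (Fin N) ℝ)) ?_ ?_ ?_ p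
    · intro k; simp [kmul, hsq, kneg, k11]
    · intro k l hkl; simp [kmul, hac k l hkl, kneg]
    · intro k
      rcases hc k with hk | hk
      · refine ⟨1, one_ne_zero, fun i => ?_, fun i => ?_⟩
        · simp [G, C, mul_add, add_mul, kmul, hk]
        · simp [G, C, mul_add, add_mul, kmul, hk, ktr, gs]
      · refine ⟨-1, by norm_num, fun i => ?_, fun i => ?_⟩
        · simp [G, C, mul_add, add_mul, kmul, hk, kneg]
        · simp [G, C, mul_add, add_mul, kmul, hk, ktr, gs, kneg]
  have h3 : (2 ^ r : ℤ) ∣ ix (fun i => G i + C i) := by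
    unfold ix
    exact dvd_sub (by exact_mod_cast h2 0) (by exact_mod_cast h2 1)
  have h4 : (2 ^ n * 2 ^ r : ℤ) ∣ d * N := by
    have : (Fintype.card (S × Fin N) : ℤ) = d * N := by simp [hd]
    rw [← this, ← h1]
    exact mul_dvd_mul_left _ h3
  exact_mod_cast h4

def Skp (n N : ℕ) : Prop := ∃ A : Fin n → Matrix (Fin N) (Fin N) ℝ, (∀ i, (A i)ᵀ = - A i) ∧
  ∀ x : Fin n → ℝ, x ≠ 0 → IsUnit (∑ i, x i • A i)

theorem Skp.mono {m n N : ℕ} (h : Skp n N) (hmn : m ≤ n) : Skp m N := by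
  obtain ⟨A, hA, hu⟩ := h
  refine ⟨fun i => A (Fin.castLE hmn i), fun i => hA _, fun x hx => ?_⟩
  let y : Fin n → ℝ := fun j => if hj : j.1 < m then x ⟨j, hj⟩ else 0
  have hy : ∀ i, y (Fin.castLE hmn i) = x i := fun i => by simp [y]
  have : ∑ i, x i • A (Fin.castLE hmn i) = ∑ j, y j • A j := by
    rw [← Finset.sum_subset (Finset.subset_univ (Finset.univ.map (Fin.castLEEmb hmn)))]
    · rw [Finset.sum_map]
      exact Finset.sum_congr rfl fun i _ => by rw [Fin.castLEEmb_apply, hy]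
    · intro j _ hj
      have : ¬ j.1 < m := fun hlt => hj (by
        rw [Finset.mem_map]; exact ⟨⟨j, hlt⟩, Finset.mem_univ _, by ext; simp⟩)
      simp [y, this]
  rw [this]
  apply hu
  intro h0
  apply hx
  funext i
  rw [← hy, h0]; rfl

theorem Skp.le {n N a b : ℕ} (hb : b < 4) (h : Skp n N) (hN : ¬ 2 ^ (4 * a + b + 1) ∣ N) :
    n < 8 * a + 2 ^ b := by
  by_contra hn
  push Not at hn
  obtain ⟨A, hA, hu⟩ := h.mono hn
  apply hN
  have canc : ∀ p q e : ℕ, p = e + (4 * a + b + 1) → q = 2 ^ e → 2 ^ p ∣ q * N → 2 ^ (4 * a + b + 1) ∣ N := by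
    rintro p q e rfl rfl h
    rw [pow_add] at h
    exact Nat.dvd_of_mul_dvd_mul_left (by positivity) h
  have p16 : 16 ^ a = 2 ^ (4 * a) := by rw [pow_mul]; norm_num
  have fin : ∀ n₀ r d, Spn n₀ r d → r ≤ 2 → n₀ = 2 ^ b → d = 2 ^ (n₀ + r - b - 1) → b + 1 ≤ n₀ + r → 
      2 ^ (4 * a + b + 1) ∣ N := by
    intro n₀ r d hs hr h0 h1 h2
    subst h0
    have e : 2 ^ b + 8 * a = 8 * a + 2 ^ b := by ring
    have hs' := hs.steps a
    rw [e] at hs'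
    have := main_dvd hr hs' A hA hu
    rw [← pow_add] at this
    refine canc _ _ (2 ^ b + r - b - 1 + 4 * a) ?_ ?_ this
    · omega
    · rw [h1, p16, pow_add]
  interval_cases b
  · exact fin 1 1 2 spn1 (by norm_num) rfl rfl (by norm_num)
  · exact fin 2 2 4 spn2 (by norm_num) rfl rfl (by norm_num)
  · exact fin 4 2 8 spn4 (by norm_num) rfl rfl (by norm_num)
  · exact fin 8 0 16 spn8 (by norm_num) rfl rfl (by norm_num)

/-- existence -/
def Skc (q d : ℕ) : Prop := ∃ (S : Type) (_ : Fintype S) (_ : DecidableEq S) (e : Fin q → Matrix S S ℝ),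
  Fintype.card S = d ∧ Cl (-1) e

theorem Skc.steps {q d : ℕ} (h : Skc q d) (a : ℕ) : Skc (q + 8 * a) (d * 16 ^ a) := by
  induction a with
  | zero => simpa using h
  | succ a ih =>
    obtain ⟨S, i1, i2, f, hd, hf⟩ := ih
    let e : Fin (q + 8 * (a + 1)) ≃ Fin (q + 8 * a) ⊕ ((Fin 3 ⊕ Fin 3 ⊕ Unit) ⊕ Unit) :=
      Fintype.equivOfCardEq (by simp; omega)
    exact ⟨S × O16, inferInstance, inferInstance, _, by simp [hd]; ring, (hf.prod cF).comp e e.injective⟩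

theorem Skc.scale {q d : ℕ} (h : Skc q d) (m : ℕ) : Skc q (d * m) := by
  obtain ⟨S, i1, i2, f, hd, hf⟩ := h
  refine ⟨S × Fin m, inferInstance, inferInstance, fun i => f i ⊗ₖ 1, by simp [hd], ⟨?_, ?_, ?_⟩⟩
  · intro i; simp [ktr, hf.tr, kneg]
  · intro i; simp [kmul, hf.sq, kneg, k11]
  · intro i j h; simp [kmul, hf.ac i j h, kneg]

theorem Skc.fin {q N : ℕ} (h : Skc q N) (n : ℕ) (hn : n ≤ q) : ∃ e : Fin n → Matrix (Fin N) (Fin N) ℝ, Cl (-1) e := by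
  obtain ⟨S, i1, i2, f, hd, hf⟩ := h
  let φ : Fin N ≃ S := Fintype.equivOfCardEq (by simp [hd])
  have hf' := hf.comp (Fin.castLE hn) (Fin.castLE_injective hn)
  refine ⟨fun i => (f (Fin.castLE hn i)).submatrix φ φ, ⟨?_, ?_, ?_⟩⟩
  · intro i; rw [transpose_submatrix, hf.tr]; rfl
  · intro i
    rw [submatrix_mul_equiv, hf.sq, submatrix_smul, Pi.smul_apply, Pi.smul_apply, submatrix_one_equiv]
  · intro i j h
    rw [submatrix_mul_equiv, submatrix_mul_equiv, hf'.ac i j h]; rfl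

theorem skc_base (b : ℕ) (hb : b < 4) : Skc (2 ^ b - 1) (2 ^ b) := by
  interval_cases b
  · exact ⟨Unit, inferInstance, inferInstance, fun i => i.elim0, by simp,
      ⟨fun i => i.elim0, fun i => i.elim0, fun i => i.elim0⟩⟩
  · exact ⟨Bool, inferInstance, inferInstance, fun i => mJ, by simp,
      gJ.toCl.comp (fun _ : Fin 1 => ()) (fun i j _ => (Subsingleton.elim (α := Fin 1) i j))⟩
  · exact ⟨Bool × Bool, inferInstance, inferInstance, qL, by simp, cL⟩
  · let e : Fin 7 ≃ Fin 3 ⊕ Fin 3 ⊕ Unit := Fintype.equivOfCardEq (by simp)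
    exact ⟨Bool × Bool × Bool, inferInstance, inferInstance, _, by simp, cE.comp e e.injective⟩

theorem exist_cl {n N a b m : ℕ} (hb : b < 4) (hN : N = 2 ^ (4 * a + b) * m) (hn : n < 8 * a + 2 ^ b) :
    ∃ e : Fin n → Matrix (Fin N) (Fin N) ℝ, Cl (-1) e := by
  have p16 : 16 ^ a = 2 ^ (4 * a) := by rw [pow_mul]; norm_num
  have h := ((skc_base b hb).steps a).scale m
  have e : 2 ^ b * 16 ^ a * m = N := by rw [hN, p16, pow_add]; ring
  rw [e] at h
  have : 1 ≤ 2 ^ b := Nat.one_le_two_pow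
  exact h.fin n (by omega)

theorem skp_of_lin {n N : ℕ} (h : ∃ A : EuclideanSpace ℝ (Fin n) →ₗ[ℝ] Matrix (Fin N) (Fin N) ℝ,
        (∀ v, (A v)ᵀ = -(A v)) ∧ ∀ v, v ≠ 0 → IsUnit (A v)) : Skp n N := by
  obtain ⟨A, h1, h2⟩ := h
  refine ⟨fun i => A (EuclideanSpace.single i 1), fun i => h1 _, fun x hx => ?_⟩
  have : ∑ i, x i • A (EuclideanSpace.single i 1) = A (WithLp.toLp 2 x) := by
    simp only [← map_smul, ← map_sum]
    congr 1
    ext j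
    simp [Finset.sum_apply, Pi.single_apply]
  rw [this]
  apply h2
  intro h0
  exact hx (congrArg WithLp.ofLp h0)

theorem one_two {n N : ℕ} (h : ∃ A : EuclideanSpace ℝ (Fin n) →ₗ[ℝ] Matrix (Fin N) (Fin N) ℝ,
        ∀ v, (A v)ᵀ = -(A v) ∧
          (A v) ^ 2 = -((‖v‖ ^ 2 : ℝ) • (1 : Matrix (Fin N) (Fin N) ℝ))) :
      (∃ A : EuclideanSpace ℝ (Fin n) →ₗ[ℝ] Matrix (Fin N) (Fin N) ℝ,
        (∀ v, (A v)ᵀ = -(A v)) ∧ ∀ v, v ≠ 0 → IsUnit (A v)) := by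
  obtain ⟨A, hA⟩ := h
  refine ⟨A, fun v => (hA v).1, fun v hv => ?_⟩
  have hn : ‖v‖ ^ 2 ≠ 0 := pow_ne_zero _ (norm_ne_zero_iff.2 hv)
  have h2 := (hA v).2
  rw [pow_two] at h2
  refine isUnit_iff_exists.2 ⟨(-(‖v‖ ^ 2)⁻¹) • A v, ?_, ?_⟩
  · rw [mul_smul_comm, h2, ← neg_smul, smul_smul]; simp [hn]
  · rw [smul_mul_assoc, h2, ← neg_smul, smul_smul]; simp [hn]

theorem lin_of_cl {n N : ℕ} (h : ∃ e : Fin n → Matrix (Fin N) (Fin N) ℝ, Cl (-1) e) :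
    ∃ A : EuclideanSpace ℝ (Fin n) →ₗ[ℝ] Matrix (Fin N) (Fin N) ℝ,
        ∀ v, (A v)ᵀ = -(A v) ∧
          (A v) ^ 2 = -((‖v‖ ^ 2 : ℝ) • (1 : Matrix (Fin N) (Fin N) ℝ)) := by
  obtain ⟨e, he⟩ := h
  refine ⟨{ toFun := fun v => ∑ i, v i • e i, map_add' := ?_, map_smul' := ?_ }, fun v => ⟨?_, ?_⟩⟩
  · intro u v; simp [add_smul, Finset.sum_add_distrib]
  · intro r v; simp [Finset.smul_sum, smul_smul]
  · change (∑ i, v i • e i)ᵀ = - ∑ i, v i • e i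
    rw [transpose_sum, ← Finset.sum_neg_distrib]
    exact Finset.sum_congr rfl fun i _ => by rw [transpose_smul, he.tr]; simp
  · change (∑ i, v i • e i) ^ 2 = _
    rw [pow_two, sum_ac he, EuclideanSpace.real_norm_sq_eq]; simp

theorem val16 (N : ℕ) (hN : 1 ≤ N) : padicValRat 2 ((N : ℚ) / 16) = (padicValNat 2 N : ℤ) - 4 := by
  have h16 : padicValRat 2 (16 : ℚ) = 4 := by
    have h0 : (16 : ℚ) = ((2 ^ 4 : ℕ) : ℚ) := by norm_num
    haveI : Fact (Nat.Prime 2) := ⟨Nat.prime_two⟩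
    rw [h0, padicValRat.of_nat, padicValNat.prime_pow]; rfl
  rw [padicValRat.div (by positivity) (by norm_num), h16, padicValRat.of_nat]

end HR

/-- Entry `𝔤 = 𝔰𝔬(N,ℂ)` of the Hurwitz–Radon value theorem
(the `𝔭`-part consisting of `iA` with `A` real skew-symmetric):
`ρ⁽¹⁾ = ρ⁽²⁾ = ρ(N/16) + 7`, Au-Yeung's number `ℝ_{sk-s}(N)`. -/
theorem hurwitzRadon_so_N_C (N : ℕ) (hN : 1 ≤ N) (n : ℕ) :
    ((∃ A : EuclideanSpace ℝ (Fin n) →ₗ[ℝ] Matrix (Fin N) (Fin N) ℝ,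
        ∀ v, (A v)ᵀ = -(A v) ∧
          (A v) ^ 2 = -((‖v‖ ^ 2 : ℝ) • (1 : Matrix (Fin N) (Fin N) ℝ))) ↔
      (∃ A : EuclideanSpace ℝ (Fin n) →ₗ[ℝ] Matrix (Fin N) (Fin N) ℝ,
        (∀ v, (A v)ᵀ = -(A v)) ∧ ∀ v, v ≠ 0 → IsUnit (A v))) ∧
    ((∃ A : EuclideanSpace ℝ (Fin n) →ₗ[ℝ] Matrix (Fin N) (Fin N) ℝ,
        (∀ v, (A v)ᵀ = -(A v)) ∧ ∀ v, v ≠ 0 → IsUnit (A v)) ↔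
      (n : ℤ) ≤ hrRho ((N : ℚ) / 16) + 7) := by
  have hrho : ∃ a b m : ℕ, b < 4 ∧ N = 2 ^ (4 * a + b) * m ∧ ¬ 2 ^ (4 * a + b + 1) ∣ N ∧
      hrRho ((N : ℚ) / 16) + 7 = 8 * a + 2 ^ b - 1 := by
    haveI : Fact (Nat.Prime 2) := ⟨Nat.prime_two⟩
    refine ⟨padicValNat 2 N / 4, padicValNat 2 N % 4, N / 2 ^ padicValNat 2 N, Nat.mod_lt _ (by norm_num), ?_, ?_, ?_⟩
    · rw [Nat.div_add_mod, Nat.mul_div_cancel' pow_padicValNat_dvd]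
    · rw [Nat.div_add_mod]
      exact pow_succ_padicValNat_not_dvd (by omega)
    · unfold hrRho
      rw [HR.val16 N hN]
      have h1 : ((padicValNat 2 N : ℤ) - 4) / 4 = ((padicValNat 2 N / 4 : ℕ) : ℤ) - 1 := by omega
      have h2 : (((padicValNat 2 N : ℤ) - 4) % 4).toNat = padicValNat 2 N % 4 := by omega
      rw [h1, h2]; ring
  obtain ⟨a, b, m, hb, hNm, hnd, hr⟩ := hrho
  rw [hr]
  have two_three : (∃ A : EuclideanSpace ℝ (Fin n) →ₗ[ℝ] Matrix (Fin N) (Fin N) ℝ,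
        (∀ v, (A v)ᵀ = -(A v)) ∧ ∀ v, v ≠ 0 → IsUnit (A v)) → (n : ℤ) ≤ 8 * a + 2 ^ b - 1 := by
    intro h
    have : n < 8 * a + 2 ^ b := (HR.skp_of_lin h).le hb hnd
    zify at this
    omega
  have three_one : (n : ℤ) ≤ 8 * a + 2 ^ b - 1 →
      (∃ A : EuclideanSpace ℝ (Fin n) →ₗ[ℝ] Matrix (Fin N) (Fin N) ℝ,
        ∀ v, (A v)ᵀ = -(A v) ∧
          (A v) ^ 2 = -((‖v‖ ^ 2 : ℝ) • (1 : Matrix (Fin N) (Fin N) ℝ))) := by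
    intro h
    refine HR.lin_of_cl (HR.exist_cl hb hNm ?_)
    zify
    omega
  exact ⟨⟨HR.one_two, fun h => three_one (two_three h)⟩, ⟨two_three, fun h => HR.one_two (three_one h)⟩⟩
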